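/- arXiv:1805.09564 — 3 statements merged into one kernel-verified Lean document; each statement's English description precedes it below -/
import Mathlib

section
/- Fix β > 0, energies E ∈ ℝ^d, and Gibbs weights g_i = e^{-βE_i}. For probability vectors p, p' ∈ ℝ^d, the following are equivalent: (1) there exists a d × d stochastic matrix Λ with Λ g = g and Λ p = p' (a Gibbs-stochastic map taking p to p'); (2) p thermo-majorizes p', i.e. for every t ≥ 0, ∑_{i=1}^d max(p_i − t g_i, 0) ≥ ∑_{i=1}^d max(p'_i − t g_i, 0). -/
open scoped BigOperators Topology
open Filter

/-- A probability vector: nonnegative entries summing to 1. -/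
def IsProbVec {ι : Type*} [Fintype ι] (p : ι → ℝ) : Prop :=
  (∀ i, 0 ≤ p i) ∧ ∑ i, p i = 1

/-- The sum of the `k` largest entries of `p`, as the supremum of sums over subsets of size `k`. -/
noncomputable def topSum {ι : Type*} [Fintype ι] (p : ι → ℝ) (k : ℕ) : ℝ :=
  sSup {x : ℝ | ∃ s : Finset ι, s.card = k ∧ x = ∑ i ∈ s, p i}

/-- `p` majorizes `p'`: for every `1 ≤ k ≤ d`, the sum of the `k` largest entries of `p`
is at least that of `p'`. -/
def Majorizes {ι : Type*} [Fintype ι] (p p' : ι → ℝ) : Prop :=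
  ∀ k : ℕ, 1 ≤ k → k ≤ Fintype.card ι → topSum p' k ≤ topSum p k

/-- A column-stochastic matrix: nonnegative entries, each column sums to 1. -/
def ColStochastic {ι κ : Type*} [Fintype ι] [Fintype κ] (Λ : Matrix ι κ ℝ) : Prop :=
  (∀ i j, 0 ≤ Λ i j) ∧ ∀ j, ∑ i, Λ i j = 1

/-- A bistochastic (doubly stochastic) matrix. -/
def Bistochastic {ι : Type*} [Fintype ι] (A : Matrix ι ι ℝ) : Prop :=
  (∀ i j, 0 ≤ A i j) ∧ (∀ i, ∑ j, A i j = 1) ∧ (∀ j, ∑ i, A i j = 1)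

/-- Real power with the convention `0 ^ a = 0` (in particular `0 ^ 0 = 0`). -/
noncomputable def rpow0 (x a : ℝ) : ℝ := if x = 0 then 0 else x ^ a

/-- The classical Rényi divergence `D_α(p‖q)`, with the conventions `0^0 = 0`, `0·ln 0 = 0`;
for `α < 0` the prefactor is `1/(1-α)`, for `α ∈ [0,1)∪(1,∞)` it is `1/(α-1)`,
and `D_1` is the Kullback–Leibler divergence. -/
noncomputable def renyiD {ι : Type*} [Fintype ι] (α : ℝ) (p q : ι → ℝ) : ℝ :=
  if α = 1 then ∑ i, p i * Real.log (p i / q i)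
  else if α < 0 then (1 / (1 - α)) * Real.log (∑ i, rpow0 (p i) α * rpow0 (q i) (1 - α))
  else (1 / (α - 1)) * Real.log (∑ i, rpow0 (p i) α * rpow0 (q i) (1 - α))

/-- The Rényi entropy `H_α(p) = (sgn α / (1-α)) ln ∑ p_i^α`, with `H_1` the Shannon entropy. -/
noncomputable def renyiH {ι : Type*} [Fintype ι] (α : ℝ) (p : ι → ℝ) : ℝ :=
  if α = 1 then -∑ i, p i * Real.log (p i)
  else ((if 0 ≤ α then (1 : ℝ) else -1) / (1 - α)) * Real.log (∑ i, rpow0 (p i) α)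

/-- Trace (total variation) distance between probability vectors. -/
noncomputable def traceDist {ι : Type*} [Fintype ι] (p p' : ι → ℝ) : ℝ :=
  (1 / 2) * ∑ i, |p i - p' i|

/-- Tensor product of two vectors: `(p ⊗ r)_{(i,j)} = p_i r_j`. -/
def tensorVec {ι κ : Type*} (p : ι → ℝ) (r : κ → ℝ) : ι × κ → ℝ :=
  fun x => p x.1 * r x.2

/-!
A column-stochastic matrix can only decrease sums of positive parts, which gives necessity.

For sufficiency, the matrices `Λ * P` with `Λ` column-stochastic form a compact convex set. If `P'`
is not one of them, a hyperplane given by some `Y` separates it from the set, and the extreme `Λ`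
that sends each column `j` to a row maximizing `Y * Pᵀ` turns separation into a strict
inequality between sums of maxima of linear forms. When `P` has the two columns `p` and `q ≥ 0`,
these are maxima of linear forms on the half-plane `y ≥ 0`. There, such a maximum is a linear form
plus a nonnegative combination of hinges `max (x - t * y) 0`, as one sees by splitting off the line
of largest slope at its last crossing with the others. So comparing hinge sums is enough. Working
homogeneously in `(x, y)` avoids the ratios `p i / q i`.
-/

lemma sum_add_sum_hinge {ι R : Type*} [Fintype ι] [Ring R] [LinearOrder R]
    (α β : R) (c : R →₀ R) (x y : ι → R) :
    ∑ i, (α * x i + β * y i + c.sum fun t w ↦ w * max (x i - t * y i) 0) =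
      α * ∑ i, x i + β * ∑ i, y i + c.sum fun t w ↦ w * ∑ i, max (x i - t * y i) 0 := by
  simp only [Finset.sum_add_distrib, Finset.mul_sum, Finsupp.sum]
  rw [Finset.sum_comm]

section Envelope

variable {κ 𝕜 : Type*} [Field 𝕜] [LinearOrder 𝕜] [IsStrictOrderedRing 𝕜]
  {s : Finset κ} {a b : κ → 𝕜} {k m : κ} {t : 𝕜}

lemma exists_crossing_of_lex_max (hm : ∀ j ∈ s, a j < a m ∨ a j = a m ∧ b j ≤ b m)
    (hs : ∃ j ∈ s, a j < a m) :
    ∃ k ∈ s, a k < a m ∧ ∃ t, a k * t + b k = a m * t + b m ∧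
      ∀ j ∈ s, a j * t + b j ≤ a m * t + b m := by
  obtain ⟨k, hk, hmax⟩ := (s.filter (a · < a m)).exists_max_image
    (fun j ↦ (b j - b m) / (a m - a j)) (by simpa [Finset.Nonempty] using hs)
  obtain ⟨hks, hkm⟩ := Finset.mem_filter.1 hk
  have hpos : ∀ {j}, a j < a m → 0 < a m - a j := sub_pos.2
  refine ⟨k, hks, hkm, (b k - b m) / (a m - a k), ?_, fun j hj ↦ ?_⟩
  · linear_combination -div_mul_cancel₀ (b k - b m) (hpos hkm).ne'
  · obtain hjm | ⟨hjm, hb⟩ := hm j hj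
    · have hle := (div_le_iff₀ (hpos hjm)).1 (hmax j (Finset.mem_filter.2 ⟨hj, hjm⟩))
      linarith
    · rw [hjm]
      gcongr

-- Every line lies below line `m` at `t`, where line `k` meets it: to the right of `t` line `m` is
-- the maximum, and to the left of `t` any line steeper than `k` lies below line `k`.
lemma sup'_eq_sup'_filter_add_hinge (hm : m ∈ s) (hk : k ∈ s) (hkm : a k ≤ a m)
    (hslope : ∀ j ∈ s, a j ≤ a m) (hcross : a k * t + b k = a m * t + b m)
    (htop : ∀ j ∈ s, a j * t + b j ≤ a m * t + b m) (x : 𝕜) {y : 𝕜} (hy : 0 ≤ y) :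
    s.sup' ⟨m, hm⟩ (fun j ↦ a j * x + b j * y) =
      (s.filter (a · ≤ a k)).sup' ⟨k, Finset.mem_filter.2 ⟨hk, le_rfl⟩⟩
        (fun j ↦ a j * x + b j * y) + (a m - a k) * max (x - t * y) 0 := by
  have hle : ∀ j ∈ s, a j * x + b j * y ≤ a j * (x - t * y) + (a m * t + b m) * y := by
    intro j hj
    linarith [mul_le_mul_of_nonneg_right (htop j hj) hy]
  have hlek : a k * x + b k * y = a k * (x - t * y) + (a m * t + b m) * y := by
    linear_combination y * hcross
  have hgap : 0 ≤ a m - a k := sub_nonneg.2 hkm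
  apply le_antisymm
  · refine Finset.sup'_le _ _ fun j hj ↦ ?_
    obtain hjk | hkj := le_total (a j) (a k)
    · exact le_add_of_le_of_nonneg (Finset.le_sup' (fun j ↦ a j * x + b j * y)
        (Finset.mem_filter.2 ⟨hj, hjk⟩)) (mul_nonneg hgap (le_max_right _ _))
    · have hsup := Finset.le_sup' (fun j ↦ a j * x + b j * y)
        (show k ∈ s.filter (a · ≤ a k) from Finset.mem_filter.2 ⟨hk, le_rfl⟩)
      have hstep : (a j - a k) * (x - t * y) ≤ (a m - a k) * max (x - t * y) 0 :=
        (mul_le_mul_of_nonneg_left (le_max_left _ 0) (sub_nonneg.2 hkj)).trans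
          (mul_le_mul_of_nonneg_right (sub_le_sub_right (hslope j hj) _) (le_max_right _ _))
      linarith [hle j hj]
  · obtain hxt | hxt := le_total (x - t * y) 0
    · rw [max_eq_right hxt, mul_zero, add_zero]
      exact Finset.sup'_mono _ (Finset.filter_subset _ _) _
    · rw [max_eq_left hxt, ← le_sub_iff_add_le]
      refine Finset.sup'_le _ _ fun j hj ↦ ?_
      obtain ⟨hjs, hjk⟩ := Finset.mem_filter.1 hj
      have hsup := Finset.le_sup' (fun j ↦ a j * x + b j * y) hm
      linarith [hle j hjs, mul_le_mul_of_nonneg_right hjk hxt]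

lemma exists_sup'_eq_add_sum_hinge (a b : κ → 𝕜) (s : Finset κ) (hs : s.Nonempty) :
    ∃ (α β : 𝕜) (c : 𝕜 →₀ 𝕜), 0 ≤ c ∧ ∀ x y, 0 ≤ y →
      s.sup' hs (fun j ↦ a j * x + b j * y) =
        α * x + β * y + c.sum fun t w ↦ w * max (x - t * y) 0 := by
  induction s using Finset.strongInduction with
  | H s ih =>
    obtain ⟨m, hms, hmax⟩ := s.exists_max_image (fun j ↦ toLex (a j, b j)) hs
    have hlex : ∀ j ∈ s, a j < a m ∨ a j = a m ∧ b j ≤ b m := fun j hj ↦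
      Prod.Lex.toLex_le_toLex.1 (hmax j hj)
    by_cases hlt : ∃ j ∈ s, a j < a m
    · obtain ⟨k, hks, hkm, t, hcross, htop⟩ := exists_crossing_of_lex_max hlex hlt
      have hss : s.filter (a · ≤ a k) ⊂ s :=
        Finset.filter_ssubset.2 ⟨m, hms, not_le.2 hkm⟩
      obtain ⟨α, β, c, hc, hrep⟩ := ih _ hss ⟨k, Finset.mem_filter.2 ⟨hks, le_rfl⟩⟩
      refine ⟨α, β, c + Finsupp.single t (a m - a k),
        add_nonneg hc (Finsupp.single_nonneg.2 (sub_nonneg.2 hkm.le)), fun x y hy ↦ ?_⟩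
      rw [sup'_eq_sup'_filter_add_hinge hms hks hkm.le
          (fun j hj ↦ (hlex j hj).elim le_of_lt fun h ↦ h.1.le) hcross htop x hy,
        hrep x y hy, Finsupp.sum_add_index' (by simp) (by simp [add_mul]),
        Finsupp.sum_single_index (by simp), add_assoc]
    · refine ⟨a m, b m, 0, le_rfl, fun x y hy ↦ ?_⟩
      rw [Finsupp.sum_zero_index, add_zero]
      refine le_antisymm (Finset.sup'_le _ _ fun j hj ↦ ?_)
        (Finset.le_sup' (fun j ↦ a j * x + b j * y) hms)
      obtain hj' | ⟨haj, hbj⟩ := hlex j hj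
      · exact absurd ⟨j, hj, hj'⟩ hlt
      · rw [haj]
        gcongr

end Envelope

/-- `RelMajorizes p q p' q'` says that the pair `(p, q)` majorizes `(p', q')`: the two pairs have
the same totals, and the hinge sums of `p` relative to `q` dominate those of `p'` relative to `q'`
at every threshold. The thresholds range over all reals because `p` and `p'` may have negative
entries. Thermo-majorization is the case where `q = q'` is the vector of Gibbs weights. -/
structure RelMajorizes {ι κ : Type*} [Fintype ι] [Fintype κ] (p q : κ → ℝ) (p' q' : ι → ℝ) :
    Prop where
  sum_eq : ∑ i, p' i = ∑ j, p j
  sum_weight_eq : ∑ i, q' i = ∑ j, q j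
  sum_hinge_le : ∀ t : ℝ, ∑ i, max (p' i - t * q' i) 0 ≤ ∑ j, max (p j - t * q j) 0

section Stochastic

open scoped Matrix

variable {ι κ ρ : Type*} [Fintype ι] [Fintype κ]

namespace ColStochastic

variable {Λ : Matrix ι κ ℝ}

lemma sum_mulVec (hΛ : ColStochastic Λ) (v : κ → ℝ) : ∑ i, (Λ *ᵥ v) i = ∑ j, v j := by
  simp only [Matrix.mulVec, dotProduct]
  rw [Finset.sum_comm]
  simp only [← Finset.sum_mul, hΛ.2, one_mul]

lemma sum_max_mulVec_le (hΛ : ColStochastic Λ) (v : κ → ℝ) :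
    ∑ i, max ((Λ *ᵥ v) i) 0 ≤ ∑ j, max (v j) 0 := by
  rw [← hΛ.sum_mulVec]
  refine Finset.sum_le_sum fun i _ ↦ max_le ?_ ?_
  · exact Finset.sum_le_sum fun j _ ↦ mul_le_mul_of_nonneg_left (le_max_left _ _) (hΛ.1 i j)
  · exact Finset.sum_nonneg fun j _ ↦ mul_nonneg (hΛ.1 i j) (le_max_right _ _)

lemma relMajorizes_mulVec (hΛ : ColStochastic Λ) (p q : κ → ℝ) :
    RelMajorizes p q (Λ *ᵥ p) (Λ *ᵥ q) where
  sum_eq := hΛ.sum_mulVec p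
  sum_weight_eq := hΛ.sum_mulVec q
  sum_hinge_le t := by
    simpa [Matrix.mulVec_sub, Matrix.mulVec_smul] using hΛ.sum_max_mulVec_le (p - t • q)

lemma setOf_eq_transpose_image :
    {Λ : Matrix ι κ ℝ | ColStochastic Λ} =
      Matrix.transposeLinearEquiv κ ι ℝ ℝ '' Set.univ.pi fun _ ↦ stdSimplex ℝ ι := by
  ext Λ
  constructor
  · exact fun hΛ ↦ ⟨Λᵀ, fun j _ ↦ ⟨fun i ↦ hΛ.1 i j, hΛ.2 j⟩, rfl⟩
  · rintro ⟨M, hM, rfl⟩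
    exact ⟨fun i j ↦ (hM j trivial).1 i, fun j ↦ (hM j trivial).2⟩

lemma isCompact_setOf : IsCompact {Λ : Matrix ι κ ℝ | ColStochastic Λ} := by
  rw [setOf_eq_transpose_image]
  exact (isCompact_univ_pi fun _ ↦ isCompact_stdSimplex ℝ ι).image
    (continuous_id.matrix_transpose)

lemma convex_setOf : Convex ℝ {Λ : Matrix ι κ ℝ | ColStochastic Λ} := by
  rw [setOf_eq_transpose_image]
  exact (convex_pi fun _ _ ↦ convex_stdSimplex ℝ ι).linear_image
    (Matrix.transposeLinearEquiv κ ι ℝ ℝ).toLinearMap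

lemma exists_trace_mul_transpose_eq_sum_sup' [Nonempty ι] (A : Matrix ι κ ℝ) :
    ∃ Λ : Matrix ι κ ℝ, ColStochastic Λ ∧ (A * Λᵀ).trace =
      ∑ j, Finset.univ.sup' Finset.univ_nonempty fun i ↦ A i j := by
  classical
  choose best _ hbest using fun j ↦
    Finset.exists_mem_eq_sup' Finset.univ_nonempty fun i ↦ A i j
  refine ⟨Matrix.of fun i j ↦ if i = best j then 1 else 0, ⟨fun i j ↦ ?_, fun j ↦ ?_⟩, ?_⟩
  · simp only [Matrix.of_apply]
    split_ifs <;> norm_num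
  · simp
  · simp only [hbest, Matrix.trace, Matrix.diag, Matrix.mul_apply, Matrix.transpose_apply,
      Matrix.of_apply, mul_ite, mul_one, mul_zero]
    rw [Finset.sum_comm]
    simp

end ColStochastic

lemma exists_forall_eq_trace_mul_transpose [Fintype ρ] {R : Type*} [CommSemiring R]
    (F : Matrix ι ρ R →ₗ[R] R) :
    ∃ Y : Matrix ι ρ R, ∀ M, F M = (Y * Mᵀ).trace := by
  classical
  refine ⟨Matrix.of fun i r ↦ F (Matrix.single i r 1), fun M ↦ ?_⟩
  conv_lhs => rw [Matrix.matrix_eq_sum_single M]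
  have hsingle : ∀ i r, F (Matrix.single i r (M i r)) = F (Matrix.single i r 1) * M i r := by
    intro i r
    rw [mul_comm, ← smul_eq_mul, ← map_smul, Matrix.smul_single, smul_eq_mul, mul_one]
  simp [Matrix.trace, Matrix.mul_apply, hsingle]

theorem exists_colStochastic_mul_eq_of_forall_trace_le [Fintype ρ] [Nonempty ι]
    (P : Matrix κ ρ ℝ) (P' : Matrix ι ρ ℝ)
    (h : ∀ Y : Matrix ι ρ ℝ, (Y * P'ᵀ).trace ≤
      ∑ j, Finset.univ.sup' Finset.univ_nonempty fun i ↦ (Y * Pᵀ) i j) :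
    ∃ Λ : Matrix ι κ ℝ, ColStochastic Λ ∧ Λ * P = P' := by
  have : LocallyConvexSpace ℝ (Matrix ι ρ ℝ) :=
    inferInstanceAs (LocallyConvexSpace ℝ (ι → ρ → ℝ))
  by_contra hP'
  let image : Set (Matrix ι ρ ℝ) := (· * P) '' {Λ : Matrix ι κ ℝ | ColStochastic Λ}
  have hcompact : IsCompact image :=
    ColStochastic.isCompact_setOf.image (continuous_id.matrix_mul continuous_const)
  have hconvex : Convex ℝ image :=
    ColStochastic.convex_setOf.is_linear_image ⟨(Matrix.add_mul · · P), (Matrix.smul_mul · · P)⟩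
  obtain ⟨F, u, hF, hu⟩ := geometric_hahn_banach_closed_point hconvex hcompact.isClosed hP'
  obtain ⟨Y, hY⟩ := exists_forall_eq_trace_mul_transpose F.toLinearMap
  obtain ⟨Λ, hΛ, htrace⟩ :=
    ColStochastic.exists_trace_mul_transpose_eq_sum_sup' (Y * Pᵀ)
  have hbest : F (Λ * P) = (Y * Pᵀ * Λᵀ).trace := by
    rw [Matrix.mul_assoc, ← Matrix.transpose_mul]
    exact hY (Λ * P)
  refine lt_irrefl (F P') ?_
  calc F P' = (Y * P'ᵀ).trace := hY P'
    _ ≤ F (Λ * P) := by rw [hbest, htrace]; exact h Y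
    _ < u := hF _ ⟨Λ, hΛ, rfl⟩
    _ < F P' := hu

namespace RelMajorizes

variable {p q : κ → ℝ} {p' q' : ι → ℝ}

lemma sum_sup'_le {σ : Type*} (h : RelMajorizes p q p' q') (hq : ∀ j, 0 ≤ q j)
    (hq' : ∀ i, 0 ≤ q' i) (a b : σ → ℝ) (s : Finset σ) (hs : s.Nonempty) :
    ∑ i, s.sup' hs (fun k ↦ a k * p' i + b k * q' i) ≤
      ∑ j, s.sup' hs (fun k ↦ a k * p j + b k * q j) := by
  obtain ⟨α, β, c, hc, hrep⟩ := exists_sup'_eq_add_sum_hinge a b s hs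
  simp only [hrep _ _ (hq _), hrep _ _ (hq' _), sum_add_sum_hinge, h.sum_eq, h.sum_weight_eq]
  refine add_le_add_right (Finset.sum_le_sum fun t _ ↦ ?_) _
  exact mul_le_mul_of_nonneg_left (h.sum_hinge_le t) (hc t)

lemma exists_colStochastic [Nonempty ι] (h : RelMajorizes p q p' q') (hq : ∀ j, 0 ≤ q j)
    (hq' : ∀ i, 0 ≤ q' i) :
    ∃ Λ : Matrix ι κ ℝ, ColStochastic Λ ∧ Λ *ᵥ q = q' ∧ Λ *ᵥ p = p' := by
  have hle (Y : Matrix ι (Fin 2) ℝ) : ∑ i, (Y i 0 * p' i + Y i 1 * q' i) ≤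
      ∑ j, Finset.univ.sup' Finset.univ_nonempty fun k ↦ Y k 0 * p j + Y k 1 * q j :=
    calc ∑ i, (Y i 0 * p' i + Y i 1 * q' i)
      _ ≤ ∑ i, Finset.univ.sup' Finset.univ_nonempty fun k ↦ Y k 0 * p' i + Y k 1 * q' i :=
        Finset.sum_le_sum fun i _ ↦
          Finset.le_sup' (fun k ↦ Y k 0 * p' i + Y k 1 * q' i) (Finset.mem_univ i)
      _ ≤ ∑ j, Finset.univ.sup' Finset.univ_nonempty fun k ↦ Y k 0 * p j + Y k 1 * q j :=
        h.sum_sup'_le hq hq' _ _ _ _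
  obtain ⟨Λ, hΛ, hmul⟩ := exists_colStochastic_mul_eq_of_forall_trace_le
    (Matrix.of fun j ↦ ![p j, q j]) (Matrix.of fun i ↦ ![p' i, q' i])
    fun Y ↦ by simpa [Matrix.trace, Matrix.mul_apply] using hle Y
  refine ⟨Λ, hΛ, funext fun i ↦ ?_, funext fun i ↦ ?_⟩
  · simpa [Matrix.mul_apply, Matrix.mulVec, dotProduct] using congrFun₂ hmul i 1
  · simpa [Matrix.mul_apply, Matrix.mulVec, dotProduct] using congrFun₂ hmul i 0

end RelMajorizes

end Stochastic

lemma sum_max_sub_mul_eq_of_nonpos {ι R : Type*} [Fintype ι] [Ring R] [LinearOrder R]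
    [IsOrderedRing R] {p q : ι → R} (hp : ∀ i, 0 ≤ p i) (hq : ∀ i, 0 ≤ q i) {t : R} (ht : t ≤ 0) :
    ∑ i, max (p i - t * q i) 0 = ∑ i, p i - t * ∑ i, q i := by
  rw [Finset.mul_sum, ← Finset.sum_sub_distrib]
  refine Finset.sum_congr rfl fun i _ ↦ max_eq_left (sub_nonneg.2 ?_)
  exact (mul_nonpos_of_nonpos_of_nonneg ht (hq i)).trans (hp i)

lemma relMajorizes_iff_of_nonneg {ι κ : Type*} [Fintype ι] [Fintype κ] {p q : κ → ℝ}
    {p' q' : ι → ℝ} (hp : ∀ j, 0 ≤ p j) (hq : ∀ j, 0 ≤ q j) (hp' : ∀ i, 0 ≤ p' i)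
    (hq' : ∀ i, 0 ≤ q' i) (hsum : ∑ i, p' i = ∑ j, p j) (hsumq : ∑ i, q' i = ∑ j, q j) :
    RelMajorizes p q p' q' ↔
      ∀ t : ℝ, 0 ≤ t → ∑ i, max (p' i - t * q' i) 0 ≤ ∑ j, max (p j - t * q j) 0 := by
  refine ⟨fun h t _ ↦ h.sum_hinge_le t, fun h ↦ ⟨hsum, hsumq, fun t ↦ ?_⟩⟩
  obtain ht | ht := le_total 0 t
  · exact h t ht
  · rw [sum_max_sub_mul_eq_of_nonpos hp' hq' ht, sum_max_sub_mul_eq_of_nonpos hp hq ht, hsum,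
      hsumq]

lemma IsProbVec.nonempty {ι : Type*} [Fintype ι] {p : ι → ℝ} (hp : IsProbVec p) : Nonempty ι :=
  not_isEmpty_iff.1 fun _ ↦ by simpa using hp.2

theorem gibbsStochastic_iff_thermoMajorizes_general {ι κ : Type*} [Fintype ι] [Fintype κ]
    [Nonempty ι] {p q : κ → ℝ} {p' q' : ι → ℝ} (hq : ∀ j, 0 ≤ q j) (hq' : ∀ i, 0 ≤ q' i) :
    (∃ Λ : Matrix ι κ ℝ, ColStochastic Λ ∧ Λ.mulVec q = q' ∧ Λ.mulVec p = p') ↔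
      RelMajorizes p q p' q' := by
  refine ⟨?_, fun h ↦ h.exists_colStochastic hq hq'⟩
  rintro ⟨Λ, hΛ, rfl, rfl⟩
  exact hΛ.relMajorizes_mulVec p q

/-- **Thermo-majorization (Theorem 2, classical form).** For Gibbs weights `g_i = e^{-βE_i}`,
a Gibbs-stochastic map taking `p` to `p'` exists iff `p` thermo-majorizes `p'`. -/
theorem gibbsStochastic_iff_thermoMajorizes {d : ℕ} (β : ℝ) (hβ : 0 < β)
    (E g : Fin d → ℝ) (hg : ∀ i, g i = Real.exp (-β * E i))
    (p p' : Fin d → ℝ) (hp : IsProbVec p) (hp' : IsProbVec p') :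
    (∃ Λ : Matrix (Fin d) (Fin d) ℝ,
        ColStochastic Λ ∧ Λ.mulVec g = g ∧ Λ.mulVec p = p') ↔
      (∀ t : ℝ, 0 ≤ t →
        ∑ i, max (p' i - t * g i) 0 ≤ ∑ i, max (p i - t * g i) 0) := by
  have hg0 : ∀ i, 0 ≤ g i := fun i ↦ (hg i).symm ▸ (Real.exp_pos _).le
  have : Nonempty (Fin d) := hp'.nonempty
  rw [gibbsStochastic_iff_thermoMajorizes_general hg0 hg0,
    relMajorizes_iff_of_nonneg hp.1 hg0 hp'.1 hg0 (hp'.2.trans hp.2.symm) rfl]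
end

section
/- Fix β > 0, energies E ∈ ℝ^d, and the Gibbs distribution q_i = e^{-βE_i}/Z with Z = ∑_j e^{-βE_j}. Let p, p' ∈ ℝ^d be probability vectors with strictly positive entries. The following are equivalent: (1) D_α(p‖q) ≥ D_α(p'‖q) for every α ∈ (−∞, ∞); (2) for every ε > 0 there exist a finite dimension m, probability vectors r, s ∈ ℝ^m with s strictly positive, a (dm) × (dm) stochastic matrix Λ satisfying Λ (q ⊗ s) = q ⊗ s, and a probability vector p'' ∈ ℝ^d with d(p'', p') ≤ ε, such that Λ (p ⊗ r) = p'' ⊗ r. -/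
open scoped BigOperators Topology
open Filter

/-!
Rényi divergences are increasing functions of `f`-divergences. These decrease under stochastic maps,
so a catalytic conversion of `p` into `p''` cannot increase any `D_α`: the catalyst contributes the
same amount on both sides. Letting `p''` tend to `p'` gives the second laws.

Conversely, by Blackwell's theorem a stochastic map `(p, q) ↦ (p', q)` exists iff, for all `τ`, the
hockey-stick divergence `∑ i, (p i - τ * q i)⁺` is at least `∑ i, (p' i - τ * q i)⁺`. The second
laws are weaker: they say that the difference `G t` of these divergences at `τ = exp t` has a
nonnegative bilateral Laplace transform, which becomes strictly positive once a little of `q` is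
admixed to `p'`. A catalyst only has to make an average of shifts of `G` nonnegative. On a grid of
small step `w` the values of `G` are bounded below by the coefficients of a polynomial whose value
at `exp (L * w)` is, up to scaling, close to the Laplace transform at `L`, hence positive. By
Pólya's theorem, multiplying this polynomial by a large power `(1 + X) ^ N` makes all its
coefficients nonnegative, so a catalyst with binomial weights works.
-/

section Hinge

/-- `g` is affine up to a nonnegative combination of hinge functions `x ↦ max (x - τ) 0`. Every
convex function agrees on a given finite set with one of these. -/
def IsHingeCombination (g : ℝ → ℝ) : Prop :=
  ∃ (A B : ℝ) (n : ℕ) (w τ : Fin n → ℝ), (∀ k, 0 ≤ w k) ∧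
    ∀ x, g x = A + B * x + ∑ k, w k * max (x - τ k) 0

lemma isHingeCombination_affine (A B : ℝ) : IsHingeCombination fun x => A + B * x :=
  ⟨A, B, 0, Fin.elim0, Fin.elim0, by simp, by simp⟩

lemma IsHingeCombination.add_hinge {g : ℝ → ℝ} (hg : IsHingeCombination g) {δ : ℝ} (hδ : 0 ≤ δ)
    (m : ℝ) : IsHingeCombination fun x => g x + δ * max (x - m) 0 := by
  obtain ⟨A, B, n, w, τ, hw, hg⟩ := hg
  refine ⟨A, B, n + 1, Fin.cons δ w, Fin.cons m τ, Fin.cases hδ hw, fun x => ?_⟩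
  simp only [hg, Fin.sum_univ_succ, Fin.cons_zero, Fin.cons_succ]
  ring

lemma exists_isHingeCombination_eqOn {f : ℝ → ℝ} (hf : ConvexOn ℝ Set.univ f) (X : Finset ℝ) :
    ∃ g, IsHingeCombination g ∧ ∀ x ∈ X, g x = f x := by
  rcases X.eq_empty_or_nonempty with rfl | hX
  · exact ⟨_, isHingeCombination_affine 0 0, by simp⟩
  -- Points are added from left to right. To the right of the last point `m` the interpolant is
  -- affine with a slope `c` below the slopes of `f`, so `c` can only increase at the next point.
  suffices H : ∃ m c, m ∈ X ∧ (∀ x ∈ X, x ≤ m) ∧ (∀ x, m < x → c ≤ (f x - f m) / (x - m)) ∧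
      ∃ g, IsHingeCombination g ∧ (∀ x ∈ X, g x = f x) ∧ ∀ x, m ≤ x → g x = f m + c * (x - m) by
    obtain ⟨_, _, _, _, _, g, hg, heq, -⟩ := H
    exact ⟨g, hg, heq⟩
  have slope_le {x y z : ℝ} (hxy : x < y) (hyz : y < z) :
      (f y - f x) / (y - x) ≤ (f z - f y) / (z - y) :=
    hf.slope_mono_adjacent (Set.mem_univ x) (Set.mem_univ z) hxy hyz
  induction X using Finset.induction_on_max with
  | empty => simp at hX
  | insert a X haX ih =>
    rcases X.eq_empty_or_nonempty with rfl | hXne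
    · refine ⟨a, f a - f (a - 1), by simp, by simp, fun x hx => ?_, _,
        isHingeCombination_affine (f a - (f a - f (a - 1)) * a) (f a - f (a - 1)), ?_, ?_⟩
      · simpa using slope_le (sub_one_lt a) hx
      · simp
      · intros; ring
    · obtain ⟨m, c, hmX, hXm, hc, g, hg, hgX, hgm⟩ := ih hXne
      have hma := haX m hmX
      have hslope : (f a - f m) / (a - m) * (a - m) = f a - f m :=
        div_mul_cancel₀ _ (sub_pos.2 hma).ne'
      have hext : ∀ x, a ≤ x → g x + ((f a - f m) / (a - m) - c) * max (x - m) 0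
          = f a + (f a - f m) / (a - m) * (x - a) := fun x hx => by
        rw [hgm x (hma.le.trans hx), max_eq_left (by linarith)]
        linear_combination hslope
      refine ⟨a, (f a - f m) / (a - m), Finset.mem_insert_self a X, ?_,
        fun x hx => slope_le hma hx, _, hg.add_hinge (sub_nonneg.2 (hc a hma)) m, ?_, hext⟩
      · simpa using fun x hx => (haX x hx).le
      · refine (Finset.forall_mem_insert ..).2 ⟨by simpa using hext a le_rfl, fun x hx => ?_⟩
        rw [hgX x hx, max_eq_right (sub_nonpos.2 (hXm x hx)), mul_zero, add_zero]

lemma convexOn_sup'_affine {κ : Type*} (s : Finset κ) (hs : s.Nonempty) (a b : κ → ℝ) :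
    ConvexOn ℝ Set.univ fun x => s.sup' hs fun j => a j + b j * x := by
  have haff : ∀ j, ConvexOn ℝ Set.univ fun x : ℝ => a j + b j * x := fun j =>
    ⟨convex_univ, fun x _ y _ u v _ _ huv => le_of_eq (by
      simp only [smul_eq_mul]; linear_combination -a j * huv)⟩
  have hsup := Finset.sup'_induction hs (fun j x => a j + b j * x)
    (p := ConvexOn ℝ Set.univ) (fun _ hf _ hg => hf.sup hg) fun j _ => haff j
  convert hsup using 1
  ext x
  rw [Finset.sup'_apply]

end Hinge

section Blackwell

variable {ι κ : Type*} [Fintype ι] [Fintype κ]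

/-- The `f`-divergence `∑ i, q i * f (p i / q i)` of finite measures `p` and `q`, where `q` is meant
to be strictly positive. -/
noncomputable def fDiv (f : ℝ → ℝ) (p q : ι → ℝ) : ℝ :=
  ∑ i, q i * f (p i / q i)

/-- The hockey-stick divergence `∑ i, (p i - τ * q i)⁺`, the `f`-divergence of the hinge function
`x ↦ max (x - τ) 0`. As a function of `τ` it encodes the relative Lorenz curve of `p` and `q`. -/
def hockeyStick (p q : ι → ℝ) (τ : ℝ) : ℝ :=
  ∑ i, max (p i - τ * q i) 0

lemma fDiv_affine_add_hinges (A B : ℝ) {n : ℕ} (w τ : Fin n → ℝ) (p : ι → ℝ) {q : ι → ℝ}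
    (hq : ∀ i, 0 < q i) :
    fDiv (fun x => A + B * x + ∑ k, w k * max (x - τ k) 0) p q
      = A * ∑ i, q i + B * ∑ i, p i + ∑ k, w k * hockeyStick p q (τ k) := by
  have hterm : ∀ i k, q i * (w k * max (p i / q i - τ k) 0) = w k * max (p i - τ k * q i) 0 :=
    fun i k => by
      rw [mul_left_comm, mul_max_of_nonneg _ _ (hq i).le, mul_sub, mul_div_cancel₀ _ (hq i).ne',
        mul_zero, mul_comm (τ k)]
  simp only [fDiv, hockeyStick, mul_add, Finset.mul_sum, Finset.sum_add_distrib, hterm]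
  rw [Finset.sum_comm]
  congr 2
  · simp only [mul_comm]
  · exact Finset.sum_congr rfl fun i _ => by rw [mul_left_comm, mul_div_cancel₀ _ (hq i).ne']

/-- A convex `f` only enters through its values at the finitely many ratios `p i / q i` and
`p' j / q' j`, where it agrees with a combination of hinges. -/
theorem fDiv_le_fDiv_of_hockeyStick_le {p q : ι → ℝ} {p' q' : κ → ℝ} (hq : ∀ i, 0 < q i)
    (hq' : ∀ j, 0 < q' j) (hp_sum : ∑ j, p' j = ∑ i, p i) (hq_sum : ∑ j, q' j = ∑ i, q i)
    (h : ∀ τ, hockeyStick p' q' τ ≤ hockeyStick p q τ) {f : ℝ → ℝ}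
    (hf : ConvexOn ℝ Set.univ f) : fDiv f p' q' ≤ fDiv f p q := by
  obtain ⟨g, ⟨A, B, n, w, τ, hw, hg⟩, hfg⟩ := exists_isHingeCombination_eqOn hf
    (Finset.univ.image (fun i => p i / q i) ∪ Finset.univ.image (fun j => p' j / q' j))
  obtain rfl : g = fun x => A + B * x + ∑ k, w k * max (x - τ k) 0 := funext hg
  have hpq : fDiv f p q = fDiv (fun x => A + B * x + ∑ k, w k * max (x - τ k) 0) p q :=
    Finset.sum_congr rfl fun i _ => by rw [hfg _ (by simp)]
  have hpq' : fDiv f p' q' = fDiv (fun x => A + B * x + ∑ k, w k * max (x - τ k) 0) p' q' :=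
    Finset.sum_congr rfl fun j _ => by rw [hfg _ (by simp)]
  rw [hpq, hpq', fDiv_affine_add_hinges A B w τ p hq, fDiv_affine_add_hinges A B w τ p' hq',
    hp_sum, hq_sum]
  have hsum : ∑ k, w k * hockeyStick p' q' (τ k) ≤ ∑ k, w k * hockeyStick p q (τ k) :=
    Finset.sum_le_sum fun k _ => mul_le_mul_of_nonneg_left (h _) (hw k)
  linarith

variable (κ) in
/-- The pairs `(Λ p, Λ q)` for `Λ` a stochastic matrix from `ι` to `κ`. Stochastic matrices are
parametrized by their columns, which are arbitrary points of the standard simplex. -/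
def stochasticImages (p q : ι → ℝ) : Set ((κ → ℝ) × (κ → ℝ)) :=
  (fun W : Matrix ι κ ℝ => (Matrix.vecMul p W, Matrix.vecMul q W)) ''
    Set.pi Set.univ fun _ => stdSimplex ℝ κ

lemma convex_stochasticImages (p q : ι → ℝ) : Convex ℝ (stochasticImages κ p q) :=
  (convex_pi fun _ _ => convex_stdSimplex ℝ κ).linear_image
    ((Matrix.vecMulBilin ℝ ℝ p).prod (Matrix.vecMulBilin ℝ ℝ q))

lemma isCompact_stochasticImages (p q : ι → ℝ) : IsCompact (stochasticImages κ p q) :=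
  (isCompact_univ_pi fun _ => isCompact_stdSimplex ℝ κ).image
    (LinearMap.continuous_of_finiteDimensional
      ((Matrix.vecMulBilin ℝ ℝ p).prod (Matrix.vecMulBilin ℝ ℝ q)))

lemma exists_colStochastic_of_mem_stochasticImages {p q : ι → ℝ} {p' q' : κ → ℝ}
    (h : (p', q') ∈ stochasticImages κ p q) :
    ∃ Λ : Matrix κ ι ℝ, ColStochastic Λ ∧ Λ.mulVec q = q' ∧ Λ.mulVec p = p' := by
  obtain ⟨W, hW, hpq⟩ := h
  obtain ⟨rfl, rfl⟩ := Prod.mk.inj hpq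
  exact ⟨W.transpose, ⟨fun j i => (hW i trivial).1 j, fun i => (hW i trivial).2⟩,
    Matrix.mulVec_transpose W q, Matrix.mulVec_transpose W p⟩

lemma exists_continuousLinearMap_prod_pi_eq_sum (l : StrongDual ℝ ((κ → ℝ) × (κ → ℝ))) :
    ∃ a b : κ → ℝ, ∀ x y, l (x, y) = ∑ j, (a j * y j + b j * x j) := by
  classical
  refine ⟨fun j => l (0, fun i => if j = i then 1 else 0),
    fun j => l (fun i => if j = i then 1 else 0, 0), fun x y => ?_⟩
  have hx := (l.comp (.inl ℝ (κ → ℝ) (κ → ℝ))).toLinearMap.pi_apply_eq_sum_univ x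
  have hy := (l.comp (.inr ℝ (κ → ℝ) (κ → ℝ))).toLinearMap.pi_apply_eq_sum_univ y
  simp only [ContinuousLinearMap.coe_coe, ContinuousLinearMap.comp_apply,
    ContinuousLinearMap.inl_apply, ContinuousLinearMap.inr_apply, smul_eq_mul] at hx hy
  rw [show (x, y) = (0, y) + (x, 0) by simp, map_add, hx, hy, ← Finset.sum_add_distrib]
  exact Finset.sum_congr rfl fun j _ => by ring

lemma sum_affine_le_fDiv_sup' [Nonempty κ] (a b p : κ → ℝ) {q : κ → ℝ} (hq : ∀ j, 0 < q j) :
    ∑ j, (a j * q j + b j * p j)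
      ≤ fDiv (fun x => Finset.univ.sup' Finset.univ_nonempty fun j => a j + b j * x) p q := by
  refine Finset.sum_le_sum fun j _ => ?_
  calc a j * q j + b j * p j = q j * (a j + b j * (p j / q j)) := by
        field_simp [(hq j).ne']
    _ ≤ _ := mul_le_mul_of_nonneg_left
        (Finset.le_sup' (fun k => a k + b k * (p j / q j)) (Finset.mem_univ j)) (hq j).le

lemma exists_mem_stochasticImages_sum_eq_fDiv_sup' [Nonempty κ] (a b : κ → ℝ) (p : ι → ℝ)
    {q : ι → ℝ} (hq : ∀ i, 0 < q i) :
    ∃ y ∈ stochasticImages κ p q, ∑ j, (a j * y.2 j + b j * y.1 j)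
      = fDiv (fun x => Finset.univ.sup' Finset.univ_nonempty fun j => a j + b j * x) p q := by
  classical
  choose k _ hk using fun i => Finset.exists_mem_eq_sup' (Finset.univ_nonempty (α := κ))
    fun j => a j + b j * (p i / q i)
  refine ⟨_, ⟨fun i => Pi.single (k i) 1, fun i _ => single_mem_stdSimplex ℝ (k i), rfl⟩, ?_⟩
  have hsum : ∀ c v : _ → ℝ, ∑ j, c j * Matrix.vecMul v (fun i => Pi.single (k i) 1) j
      = ∑ i, c (k i) * v i := fun c v => by
    simp only [Matrix.vecMul, dotProduct, Finset.mul_sum]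
    rw [Finset.sum_comm]
    simp [Pi.single_apply]
  rw [Finset.sum_add_distrib, hsum, hsum, ← Finset.sum_add_distrib]
  refine Finset.sum_congr rfl fun i _ => ?_
  simp only [hk]
  field_simp [(hq i).ne']

/-- A separating functional `∑ j, (a j * q j + b j * p j)` is maximized over the images of `(p, q)`
by sending each `i` to a `j` with `a j + b j * (p i / q i)` maximal; the maximum is the
`f`-divergence for the convex function `f x = max_j (a j + b j * x)`. -/
theorem exists_colStochastic_of_hockeyStick_le [Nonempty κ] {p q : ι → ℝ} {p' q' : κ → ℝ}
    (hq : ∀ i, 0 < q i) (hq' : ∀ j, 0 < q' j) (hp_sum : ∑ j, p' j = ∑ i, p i)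
    (hq_sum : ∑ j, q' j = ∑ i, q i) (h : ∀ τ, hockeyStick p' q' τ ≤ hockeyStick p q τ) :
    ∃ Λ : Matrix κ ι ℝ, ColStochastic Λ ∧ Λ.mulVec q = q' ∧ Λ.mulVec p = p' := by
  apply exists_colStochastic_of_mem_stochasticImages
  by_contra hmem
  obtain ⟨l, u, hl_lt, hl_gt⟩ := geometric_hahn_banach_closed_point
    (convex_stochasticImages p q) (isCompact_stochasticImages p q).isClosed hmem
  obtain ⟨a, b, hl⟩ := exists_continuousLinearMap_prod_pi_eq_sum l
  obtain ⟨y, hy, hy_eq⟩ := exists_mem_stochasticImages_sum_eq_fDiv_sup' a b p hq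
  refine lt_irrefl u ?_
  calc u < ∑ j, (a j * q' j + b j * p' j) := by rwa [← hl]
    _ ≤ _ := sum_affine_le_fDiv_sup' a b p' hq'
    _ ≤ _ := fDiv_le_fDiv_of_hockeyStick_le hq hq' hp_sum hq_sum h
        (convexOn_sup'_affine Finset.univ Finset.univ_nonempty a b)
    _ = l y := by rw [← hy_eq, ← hl]
    _ < u := hl_lt y hy

end Blackwell

section Polya

open Polynomial

/-- Some `(1 + X) ^ N` turns `P` into a polynomial with nonnegative coefficients. By Pólya's
theorem this holds for every `P` that is positive on the positive reals. -/
def HasPolyaMultiplier (P : ℝ[X]) : Prop :=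
  ∃ N : ℕ, ∀ k, 0 ≤ ((1 + X) ^ N * P).coeff k

lemma hasPolyaMultiplier_of_coeff_nonneg {P : ℝ[X]} (h : ∀ k, 0 ≤ P.coeff k) :
    HasPolyaMultiplier P :=
  ⟨0, by simpa using h⟩

lemma HasPolyaMultiplier.mul {P Q : ℝ[X]} (hP : HasPolyaMultiplier P)
    (hQ : HasPolyaMultiplier Q) : HasPolyaMultiplier (P * Q) := by
  obtain ⟨M, hM⟩ := hP
  obtain ⟨N, hN⟩ := hQ
  refine ⟨M + N, fun k => ?_⟩
  rw [pow_add, mul_mul_mul_comm, coeff_mul]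
  exact Finset.sum_nonneg fun x _ => mul_nonneg (hM x.1) (hN x.2)

lemma HasPolyaMultiplier.eval_one_nonneg {P : ℝ[X]} (hP : HasPolyaMultiplier P) :
    0 ≤ P.eval 1 := by
  obtain ⟨N, hN⟩ := hP
  have h : 0 ≤ ((1 + X) ^ N * P).eval 1 := by
    rw [eval_eq_sum_range]
    exact Finset.sum_nonneg fun k _ => by simpa using hN k
  rw [eval_mul, eval_pow] at h
  exact nonneg_of_mul_nonneg_right h (by norm_num)

lemma cast_add_one_mul_choose_eq (n k : ℕ) :
    ((n : ℝ) + 1) * n.choose k = (n + 1 - k) * (n + 1).choose k := by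
  rcases le_or_gt k (n + 1) with hk | hk
  · have h := congrArg (Nat.cast : ℕ → ℝ) (Nat.choose_mul_succ_eq n k)
    push_cast [Nat.cast_sub hk] at h
    linear_combination h
  · simp [Nat.choose_eq_zero_of_lt hk, Nat.choose_eq_zero_of_lt (Nat.lt_of_succ_lt hk)]

lemma add_one_mul_coeff_one_add_X_pow_mul_X (n k : ℕ) :
    ((n : ℝ) + 1) * ((1 + X : ℝ[X]) ^ n * X).coeff k = k * (n + 1).choose k := by
  cases k with
  | zero => simp
  | succ k =>
    rw [coeff_mul_X, coeff_one_add_X_pow]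
    exact_mod_cast (Nat.add_one_mul_choose_eq n k).trans (mul_comm _ _)

lemma mul_coeff_one_add_X_pow_mul_X_sq (n k : ℕ) :
    ((n : ℝ) + 2) * (n + 1) * ((1 + X : ℝ[X]) ^ n * X ^ 2).coeff k
      = k * (k - 1) * (n + 2).choose k := by
  cases k with
  | zero => simp
  | succ k =>
    have h₁ := add_one_mul_coeff_one_add_X_pow_mul_X n k
    have h₂ : ((n : ℝ) + 2) * (n + 1).choose k = (k + 1) * (n + 2).choose (k + 1) := by
      exact_mod_cast (Nat.add_one_mul_choose_eq (n + 1) k).trans (mul_comm _ _)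
    rw [pow_two, ← mul_assoc ((1 + X : ℝ[X]) ^ n), coeff_mul_X]
    push_cast
    linear_combination ((n : ℝ) + 2) * h₁ + (k : ℝ) * h₂

lemma mul_coeff_one_add_X_pow_mul_quadratic (a b c : ℝ) (n k : ℕ) :
    ((n : ℝ) + 2) * (n + 1) * ((1 + X) ^ n * (C a * X ^ 2 + C b * X + C c)).coeff k
      = (n + 2).choose k * (a * (k * (k - 1)) + b * (k * (n + 2 - k))
          + c * ((n + 2 - k) * (n + 1 - k))) := by
  have hX := add_one_mul_coeff_one_add_X_pow_mul_X n k
  have hX_sq := mul_coeff_one_add_X_pow_mul_X_sq n k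
  have h₁ := cast_add_one_mul_choose_eq n k
  have h₂ := cast_add_one_mul_choose_eq (n + 1) k
  have hsplit : (1 + X) ^ n * (C a * X ^ 2 + C b * X + C c)
      = C a * ((1 + X) ^ n * X ^ 2) + C b * ((1 + X) ^ n * X) + C c * (1 + X) ^ n := by ring
  rw [hsplit, coeff_add, coeff_add, coeff_C_mul, coeff_C_mul, coeff_C_mul, coeff_one_add_X_pow]
  push_cast at h₂
  linear_combination a * hX_sq + b * (n + 2) * hX + b * k * h₂ + c * (n + 2) * h₁
    + c * (n + 1 - k) * h₂

lemma exists_mul_add_sq_le_quadraticForm {a b c : ℝ} (ha : 0 < a) (hdisc : b ^ 2 < 4 * a * c) :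
    ∃ δ > 0, ∀ x y : ℝ, δ * (x + y) ^ 2 ≤ a * x ^ 2 + b * (x * y) + c * y ^ 2 := by
  have hc : 0 < c := by nlinarith [sq_nonneg b]
  set ε := (4 * a * c - b ^ 2) / (4 * (a + c))
  have hε_pos : 0 < ε := div_pos (by linarith) (by linarith)
  have hε_mul : ε * (4 * (a + c)) = 4 * a * c - b ^ 2 := div_mul_cancel₀ _ (by linarith)
  have hε_lt : ε < a := by nlinarith [sq_nonneg b]
  refine ⟨ε / 2, half_pos hε_pos, fun x y => ?_⟩
  have hpsd : 0 ≤ (a - ε) * x ^ 2 + b * (x * y) + (c - ε) * y ^ 2 := by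
    refine nonneg_of_mul_nonneg_right ?_ (sub_pos.2 hε_lt)
    have hcompl : (a - ε) * ((a - ε) * x ^ 2 + b * (x * y) + (c - ε) * y ^ 2)
        = ((a - ε) * x + b / 2 * y) ^ 2 + (ε * y) ^ 2 := by
      linear_combination -(y ^ 2 / 4) * hε_mul
    rw [hcompl]
    positivity
  nlinarith [mul_nonneg hε_pos.le (sq_nonneg (x - y))]

lemma hasPolyaMultiplier_quadratic_of_discrim_neg {a b c : ℝ} (ha : 0 < a)
    (hdisc : b ^ 2 < 4 * a * c) : HasPolyaMultiplier (C a * X ^ 2 + C b * X + C c) := by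
  obtain ⟨δ, hδ, hform⟩ := exists_mul_add_sq_le_quadraticForm ha hdisc
  have hc : 0 < c := by nlinarith [sq_nonneg b]
  obtain ⟨N, hN⟩ := exists_nat_ge ((a + c) / δ)
  refine ⟨N, fun k => ?_⟩
  have hcoeff := mul_coeff_one_add_X_pow_mul_quadratic a b c N k
  have hpos : (0 : ℝ) < (N + 2) * (N + 1) := by positivity
  refine nonneg_of_mul_nonneg_right (hcoeff ▸ ?_) hpos
  rcases le_or_gt k (N + 2) with hk | hk
  · refine mul_nonneg (Nat.cast_nonneg _) ?_
    have hk' : (k : ℝ) ≤ N + 2 := by exact_mod_cast hk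
    rw [div_le_iff₀ hδ] at hN
    have hquad := hform k (N + 2 - k)
    have hlin : a * k + c * (N + 2 - k) ≤ (a + c) * (N + 2) := by
      nlinarith [(Nat.cast_nonneg k : (0 : ℝ) ≤ k)]
    have hlarge : (a + c) * (N + 2) ≤ δ * (N + 2) ^ 2 := by nlinarith
    rw [add_sub_cancel] at hquad
    linear_combination hquad + hlin + hlarge
  · simp [Nat.choose_eq_zero_of_lt hk]

lemma const_nonneg_of_quadratic_pos {a b c : ℝ} (h : ∀ z > 0, 0 < a * z ^ 2 + b * z + c) :
    0 ≤ c := by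
  have hlim : Tendsto (fun z => a * z ^ 2 + b * z + c) (𝓝[>] 0) (𝓝 c) :=
    ((by fun_prop : Continuous fun z => a * z ^ 2 + b * z + c).tendsto' 0 c
      (by simp)).mono_left nhdsWithin_le_nhds
  exact ge_of_tendsto hlim (eventually_mem_nhdsWithin.mono fun z hz => (h z hz).le)

lemma coeff_nonneg_or_discrim_neg_of_quadratic_pos {a b c : ℝ}
    (h : ∀ z > 0, 0 < a * z ^ 2 + b * z + c) :
    (0 ≤ a ∧ 0 ≤ b ∧ 0 ≤ c) ∨ (0 < a ∧ b ^ 2 < 4 * a * c) := by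
  have hc : 0 ≤ c := const_nonneg_of_quadratic_pos h
  have ha : 0 ≤ a := const_nonneg_of_quadratic_pos (a := c) (b := b) fun z hz => by
    have hrev : c * z ^ 2 + b * z + a = z ^ 2 * (a * z⁻¹ ^ 2 + b * z⁻¹ + c) := by
      field_simp; ring
    rw [hrev]
    exact mul_pos (by positivity) (h _ (inv_pos.2 hz))
  refine (le_or_gt 0 b).imp (fun hb => ⟨ha, hb, hc⟩) fun hb => ?_
  have ha_pos : 0 < a := ha.lt_of_ne' fun ha_zero => by
    have hz := h ((c + 1) / -b) (div_pos (by linarith) (by linarith))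
    rw [ha_zero, div_neg, mul_neg, mul_div_cancel₀ _ hb.ne] at hz
    linarith
  have hvertex := h (-b / (2 * a)) (div_pos (by linarith) (by linarith))
  have hvertex_eq : a * (-b / (2 * a)) ^ 2 + b * (-b / (2 * a)) + c
      = (4 * a * c - b ^ 2) / (4 * a) := by
    field_simp; ring
  rw [hvertex_eq, div_pos_iff_of_pos_right (by linarith)] at hvertex
  exact ⟨ha_pos, by linarith⟩

lemma hasPolyaMultiplier_of_degree_le_two {P : ℝ[X]} (hdeg : P.degree ≤ 2)
    (h : ∀ z > 0, 0 < P.eval z) : HasPolyaMultiplier P := by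
  rw [eq_quadratic_of_degree_le_two hdeg] at h ⊢
  simp only [eval_add, eval_mul, eval_C, eval_pow, eval_X] at h
  rcases coeff_nonneg_or_discrim_neg_of_quadratic_pos h with ⟨ha, hb, hc⟩ | ⟨ha, hdisc⟩
  · refine hasPolyaMultiplier_of_coeff_nonneg fun k => ?_
    rw [← eq_quadratic_of_degree_le_two hdeg]
    match k with
    | 0 => exact hc
    | 1 => exact hb
    | 2 => exact ha
    | k + 3 =>
      exact (coeff_eq_zero_of_degree_lt (hdeg.trans_lt (by norm_cast; omega))).ge
  · exact hasPolyaMultiplier_quadratic_of_discrim_neg ha hdisc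

lemma eval_pos_or_neg_eval_pos_of_eval_ne_zero {P : ℝ[X]} (h : ∀ z > 0, P.eval z ≠ 0) :
    (∀ z > 0, 0 < P.eval z) ∨ ∀ z > 0, 0 < (-P).eval z := by
  by_contra! ⟨⟨x, hx, hPx⟩, y, hy, hPy⟩
  rw [eval_neg, neg_nonpos] at hPy
  obtain ⟨z, hz, hPz⟩ :=
    isPreconnected_Ioi.intermediate_value hx hy P.continuous.continuousOn ⟨hPx, hPy⟩
  exact h z hz hPz

lemma hasPolyaMultiplier_or_neg_of_degree_le_two {P : ℝ[X]} (hdeg : P.degree ≤ 2)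
    (h : ∀ z > 0, P.eval z ≠ 0) : HasPolyaMultiplier P ∨ HasPolyaMultiplier (-P) :=
  (eval_pos_or_neg_eval_pos_of_eval_ne_zero h).imp (hasPolyaMultiplier_of_degree_le_two hdeg)
    (hasPolyaMultiplier_of_degree_le_two (by rwa [degree_neg]))

lemma hasPolyaMultiplier_or_neg_of_eval_ne_zero {P : ℝ[X]} (h : ∀ z > 0, P.eval z ≠ 0) :
    HasPolyaMultiplier P ∨ HasPolyaMultiplier (-P) := by
  induction P using WfDvdMonoid.induction_on_irreducible with
  | zero => exact absurd eval_zero (h 1 one_pos)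
  | unit u hu =>
    exact hasPolyaMultiplier_or_neg_of_degree_le_two
      ((degree_eq_zero_of_isUnit hu).trans_le zero_le_two) h
  | mul P Q _ hQ ihP =>
    have hne : ∀ z > 0, Q.eval z ≠ 0 ∧ P.eval z ≠ 0 := fun z hz =>
      mul_ne_zero_iff.1 (eval_mul (R := ℝ) ▸ h z hz)
    rcases hasPolyaMultiplier_or_neg_of_degree_le_two hQ.degree_le_two fun z hz => (hne z hz).1
      with hQ' | hQ' <;> rcases ihP fun z hz => (hne z hz).2 with hP' | hP'
    · exact .inl (hQ'.mul hP')
    · exact .inr (mul_neg Q P ▸ hQ'.mul hP')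
    · exact .inr (neg_mul Q P ▸ hQ'.mul hP')
    · exact .inl (neg_mul_neg Q P ▸ hQ'.mul hP')

/-- **Pólya's theorem** in one variable. Over `ℝ` the irreducible factors of `P` have degree at most
two, and the product of two multipliers is a multiplier for the product. -/
theorem hasPolyaMultiplier_of_eval_pos {P : ℝ[X]} (h : ∀ z > 0, 0 < P.eval z) :
    HasPolyaMultiplier P :=
  (hasPolyaMultiplier_or_neg_of_eval_ne_zero fun z hz => (h z hz).ne').resolve_right fun hneg => by
    have := hneg.eval_one_nonneg
    rw [eval_neg] at this
    linarith [h 1 one_pos]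

end Polya

section LocalMin

open Set intervalIntegral

/-- The minimum of a continuous `G` over the closed interval of radius `h` around `t`. The
parametrization by `[-1, 1]` makes it jointly continuous in `h` and `t`, also at `h = 0`. -/
noncomputable def localMin (G : ℝ → ℝ) (h t : ℝ) : ℝ :=
  sInf ((fun s => G (t + h * s)) '' Icc (-1) 1)

variable {G : ℝ → ℝ}

lemma localMin_zero (G : ℝ → ℝ) (t : ℝ) : localMin G 0 t = G t := by
  simp [localMin, (nonempty_Icc.2 (by norm_num : (-1 : ℝ) ≤ 1)).image_const]

lemma localMin_comp_neg (G : ℝ → ℝ) (h t : ℝ) :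
    localMin (fun s => G (-s)) h t = localMin G h (-t) := by
  have himage : (fun s => G (-(t + h * s))) '' Icc (-1) 1
      = (fun s => G (-t + h * s)) '' (Neg.neg '' Icc (-1) 1) := by
    rw [image_image]
    exact image_congr fun s _ => congrArg G (by ring)
  simp only [localMin, himage, image_neg_Icc, neg_neg]

lemma continuous_localMin (hG : Continuous G) : Continuous fun x : ℝ × ℝ => localMin G x.1 x.2 :=
  isCompact_Icc.continuous_sInf (by fun_prop)

lemma localMin_le (hG : Continuous G) {h s t : ℝ} (hst : |s - t| ≤ h) : localMin G h t ≤ G s := by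
  obtain ⟨c, hc, hs⟩ : ∃ c ∈ Icc (-1 : ℝ) 1, t + h * c = s := by
    rcases (abs_nonneg (s - t)).trans hst |>.eq_or_lt with rfl | hh
    · exact ⟨0, by norm_num, by rw [← sub_eq_zero.1 (abs_nonpos_iff.1 hst)]; ring⟩
    · exact ⟨(s - t) / h, abs_le.1 (by rwa [abs_div, abs_of_pos hh, div_le_one hh]),
        by field_simp; ring⟩
  exact csInf_le (isCompact_Icc.bddBelow_image (by fun_prop)) ⟨c, hc, by simp only [hs]⟩

lemma le_localMin {h t m : ℝ} (hh : 0 ≤ h) (hm : ∀ s, |s - t| ≤ h → m ≤ G s) :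
    m ≤ localMin G h t := by
  refine le_csInf ((nonempty_Icc.2 (by norm_num)).image _) ?_
  rintro _ ⟨c, hc, rfl⟩
  refine hm _ ?_
  rw [add_sub_cancel_left, abs_mul, abs_of_nonneg hh]
  exact mul_le_of_le_one_right hh (abs_le.2 hc)

lemma eventually_forall_lt_localMin (hG : Continuous G) {K : Set ℝ} (hK : IsCompact K) {m : ℝ}
    (hm : ∀ t ∈ K, m < G t) : ∀ᶠ h in 𝓝 0, ∀ t ∈ K, m < localMin G h t :=
  hK.eventually_forall_of_forall_eventually fun t ht =>
    (continuous_localMin hG).tendsto (0, t) |>.eventually_const_lt (by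
      rw [localMin_zero]; exact hm t ht)

lemma le_integral_of_forall_le {f : ℝ → ℝ} (hf : Continuous f) {c x y : ℝ} (hxy : x ≤ y)
    (hc : ∀ t ∈ Icc x y, c ≤ f t) : c * (y - x) ≤ ∫ t in x..y, f t := by
  have hmono := integral_mono_on hxy (intervalIntegrable_const (μ := MeasureTheory.volume) (c := c))
    (hf.intervalIntegrable x y) hc
  rwa [integral_const, smul_eq_mul, mul_comm] at hmono

lemma le_integral_mul_exp {g : ℝ → ℝ} (hg : Continuous g) {b u v w a L M γ : ℝ}
    (hbu : b ≤ u) (huv : u ≤ v) (hvw : v ≤ w) (hwa : w ≤ a) (hL : 0 ≤ L) (hM : 0 ≤ M) (hγ : 0 ≤ γ)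
    (hg_bu : ∀ t ∈ Icc b u, -M ≤ g t) (hg_ua : ∀ t ∈ Icc u a, 0 ≤ g t)
    (hg_vw : ∀ t ∈ Icc v w, γ ≤ g t) :
    γ * Real.exp (L * v) * (w - v) - M * Real.exp (L * u) * (u - b)
      ≤ ∫ t in b..a, g t * Real.exp (L * t) := by
  have hcont : Continuous fun t => g t * Real.exp (L * t) := by fun_prop
  have exp_mono {x y : ℝ} (hxy : x ≤ y) : Real.exp (L * x) ≤ Real.exp (L * y) :=
    Real.exp_le_exp.2 (mul_le_mul_of_nonneg_left hxy hL)
  have nonneg_on : ∀ t ∈ Icc u a, 0 ≤ g t * Real.exp (L * t) := fun t ht =>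
    mul_nonneg (hg_ua t ht) (Real.exp_pos _).le
  have h_bu : -M * Real.exp (L * u) * (u - b) ≤ ∫ t in b..u, g t * Real.exp (L * t) :=
    le_integral_of_forall_le hcont hbu fun t ht => by
      nlinarith [hg_bu t ht, Real.exp_pos (L * t), exp_mono ht.2]
  have h_uv : 0 ≤ ∫ t in u..v, g t * Real.exp (L * t) :=
    integral_nonneg huv fun t ht => nonneg_on t ⟨ht.1, ht.2.trans (hvw.trans hwa)⟩
  have h_vw : γ * Real.exp (L * v) * (w - v) ≤ ∫ t in v..w, g t * Real.exp (L * t) :=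
    le_integral_of_forall_le hcont hvw fun t ht =>
      mul_le_mul (hg_vw t ht) (exp_mono ht.1) (Real.exp_pos _).le (hγ.trans (hg_vw t ht))
  have h_wa : 0 ≤ ∫ t in w..a, g t * Real.exp (L * t) :=
    integral_nonneg hwa fun t ht => nonneg_on t ⟨(huv.trans hvw).trans ht.1, ht.2⟩
  have hint : ∀ x y, IntervalIntegrable (fun t => g t * Real.exp (L * t)) MeasureTheory.volume
      x y := hcont.intervalIntegrable
  linarith [integral_add_adjacent_intervals (hint b u) (hint u v),
    integral_add_adjacent_intervals (hint b v) (hint v w),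
    integral_add_adjacent_intervals (hint b w) (hint w a)]

lemma eventually_forall_integral_mul_exp_pos {b u v w a M γ : ℝ} (hbu : b ≤ u) (huv : u < v)
    (hvw : v < w) (hwa : w ≤ a) (hM : 0 ≤ M) (hγ : 0 < γ) :
    ∀ᶠ L in atTop, ∀ g : ℝ → ℝ, Continuous g → (∀ t ∈ Icc b u, -M ≤ g t) →
      (∀ t ∈ Icc u a, 0 ≤ g t) → (∀ t ∈ Icc v w, γ ≤ g t) →
      0 < ∫ t in b..a, g t * Real.exp (L * t) := by
  have hlim : Tendsto (fun L => Real.exp (L * (v - u))) atTop atTop :=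
    Real.tendsto_exp_atTop.comp (tendsto_id.atTop_mul_const (sub_pos.2 huv))
  filter_upwards [eventually_ge_atTop 0,
    (hlim.const_mul_atTop (mul_pos hγ (sub_pos.2 hvw))).eventually_gt_atTop (M * (u - b))]
    with L hL hlarge g hg hg_bu hg_ua hg_vw
  refine lt_of_lt_of_le ?_ (le_integral_mul_exp hg hbu huv.le hvw.le hwa hL hM hγ.le
    hg_bu hg_ua hg_vw)
  have hexp_v : Real.exp (L * v) = Real.exp (L * u) * Real.exp (L * (v - u)) := by
    rw [← Real.exp_add]; ring_nf
  rw [hexp_v]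
  linear_combination mul_pos (Real.exp_pos (L * u)) (sub_pos.2 hlarge)

variable {b lo hi t₀ t₁ a : ℝ}

lemma exists_forall_ge_integral_localMin_pos (hG : Continuous G) (hb : b ≤ hi) (ht₁ : hi < t₁)
    (ht₁a : t₁ < a) (hG_hi : ∀ t, hi ≤ t → 0 ≤ G t) (hGt₁ : 0 < G t₁) :
    ∃ R, ∀ᶠ h in 𝓝[>] 0, ∀ L, R ≤ L → 0 < ∫ t in b..a, localMin G h t * Real.exp (L * t) := by
  set u := (hi + t₁) / 2
  have hu : hi < u ∧ u < t₁ := ⟨left_lt_add_div_two.2 ht₁, add_div_two_lt_right.2 ht₁⟩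
  obtain ⟨v, w, -, hvw_nhds, hvw⟩ := exists_Icc_mem_subset_of_mem_nhds
    ((hG.continuousAt.eventually_const_lt (half_lt_self hGt₁)).and (Ioo_mem_nhds hu.2 ht₁a))
  obtain ⟨hv, hw⟩ := Icc_mem_nhds_iff.1 hvw_nhds
  have hvw_lt : v < w := hv.trans hw
  obtain ⟨m, hm⟩ := isCompact_Icc.bddBelow_image (hG.continuousOn (s := Icc b u))
  have hM : ∀ t ∈ Icc b u, -(|m| + 1) < G t := fun t ht => by
    linarith [hm (mem_image_of_mem G ht), neg_abs_le m]
  obtain ⟨R, hR⟩ := eventually_atTop.1 (eventually_forall_integral_mul_exp_pos (b := b) (a := a)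
    (hb.trans hu.1.le) (hvw (left_mem_Icc.2 hvw_lt.le)).2.1 hvw_lt
    (hvw (right_mem_Icc.2 hvw_lt.le)).2.2.le (by positivity : 0 ≤ |m| + 1) (half_pos hGt₁))
  refine ⟨R, ?_⟩
  filter_upwards [self_mem_nhdsWithin, Ioo_mem_nhdsGT (sub_pos.2 hu.1),
    nhdsWithin_le_nhds (eventually_forall_lt_localMin hG isCompact_Icc hM),
    nhdsWithin_le_nhds (eventually_forall_lt_localMin hG isCompact_Icc fun t ht => (hvw ht).1)]
    with h hh hh_lt hbu_gt hvw_gt L hL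
  refine hR L hL _ ((continuous_localMin hG).comp (.prodMk_right h)) (fun t ht => (hbu_gt t ht).le)
    (fun t ht => le_localMin (le_of_lt hh) fun s hs => hG_hi s ?_) fun t ht => (hvw_gt t ht).le
  linarith [neg_le_of_abs_le hs, hh_lt.2, ht.1]

lemma exists_forall_le_integral_localMin_pos (hG : Continuous G) (ha : lo ≤ a) (ht₀ : t₀ < lo)
    (hbt₀ : b < t₀) (hG_lo : ∀ t, t ≤ lo → 0 ≤ G t) (hGt₀ : 0 < G t₀) :
    ∃ R, ∀ᶠ h in 𝓝[>] 0, ∀ L, L ≤ R → 0 < ∫ t in b..a, localMin G h t * Real.exp (L * t) := by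
  obtain ⟨R, hR⟩ := exists_forall_ge_integral_localMin_pos (G := fun t => G (-t)) (by fun_prop)
    (neg_le_neg ha) (neg_lt_neg ht₀) (neg_lt_neg hbt₀) (fun t ht => hG_lo _ (neg_le.1 ht))
    (by rwa [neg_neg])
  refine ⟨-R, hR.mono fun h hh L hL => ?_⟩
  have := hh (-L) (le_neg.1 hL)
  simp only [localMin_comp_neg, neg_mul, ← mul_neg] at this
  rwa [integral_comp_neg fun t => localMin G h t * Real.exp (L * t), neg_neg, neg_neg] at this

lemma eventually_forall_mem_integral_localMin_pos (hG : Continuous G) {K : Set ℝ}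
    (hK : IsCompact K) (hpos : ∀ L ∈ K, 0 < ∫ t in b..a, G t * Real.exp (L * t)) :
    ∀ᶠ h in 𝓝 0, ∀ L ∈ K, 0 < ∫ t in b..a, localMin G h t * Real.exp (L * t) := by
  have hcont : Continuous fun x : ℝ × ℝ =>
      ∫ t in b..a, localMin G x.1 t * Real.exp (x.2 * t) := by
    refine continuous_parametric_intervalIntegral_of_continuous' ?_ b a
    have := (continuous_localMin hG).comp
      ((continuous_fst.comp continuous_fst).prodMk (continuous_snd (X := ℝ × ℝ) (Y := ℝ)))
    exact this.mul (by fun_prop)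
  refine hK.eventually_forall_of_forall_eventually fun L hL =>
    (hcont.tendsto (0, L)).eventually_const_lt ?_
  simpa only [localMin_zero] using hpos L hL

theorem eventually_forall_integral_localMin_pos (hG : Continuous G) (hbt₀ : b < t₀) (ht₀ : t₀ < lo)
    (ht₁ : hi < t₁) (ht₁a : t₁ < a) (hba : b ≤ hi) (hlo : lo ≤ a)
    (hG_lo : ∀ t, t ≤ lo → 0 ≤ G t) (hG_hi : ∀ t, hi ≤ t → 0 ≤ G t)
    (hGt₀ : 0 < G t₀) (hGt₁ : 0 < G t₁) (hpos : ∀ L, 0 < ∫ t in b..a, G t * Real.exp (L * t)) :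
    ∀ᶠ h in 𝓝[>] 0, ∀ L, 0 < ∫ t in b..a, localMin G h t * Real.exp (L * t) := by
  obtain ⟨R, hR⟩ := exists_forall_ge_integral_localMin_pos hG hba ht₁ ht₁a hG_hi hGt₁
  obtain ⟨R', hR'⟩ := exists_forall_le_integral_localMin_pos hG hlo ht₀ hbt₀ hG_lo hGt₀
  filter_upwards [hR, hR', nhdsWithin_le_nhds (eventually_forall_mem_integral_localMin_pos hG
    (isCompact_Icc (a := R') (b := R)) fun L _ => hpos L)] with h h_ge h_le h_mem L
  rcases le_total R L with hL | hL
  · exact h_ge L hL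
  · rcases le_total L R' with hL' | hL'
    exacts [h_le L hL', h_mem L ⟨hL', hL⟩]

end LocalMin

section Discretization

open Set intervalIntegral Polynomial

variable {G : ℝ → ℝ} {b lo hi t₀ t₁ a w : ℝ}

/-- The polynomial whose `k`-th coefficient is the minimum of `G` over the cell
`[b + k * w, b + (k + 1) * w]`, for `k < n`. -/
noncomputable def cellMinPoly (G : ℝ → ℝ) (b w : ℝ) (n : ℕ) : ℝ[X] :=
  ∑ k ∈ Finset.range n, C (localMin G (w / 2) (b + (k + 1 / 2) * w)) * X ^ k

lemma coeff_cellMinPoly (G : ℝ → ℝ) (b w : ℝ) (n k : ℕ) :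
    (cellMinPoly G b w n).coeff k
      = if k < n then localMin G (w / 2) (b + (k + 1 / 2) * w) else 0 := by
  simp [cellMinPoly, coeff_X_pow]

lemma localMin_le_localMin_cell (hG : Continuous G) (hw : 0 ≤ w) {k t : ℝ}
    (ht : t ∈ Icc (b + k * w) (b + (k + 1) * w)) :
    localMin G w t ≤ localMin G (w / 2) (b + (k + 1 / 2) * w) :=
  le_localMin (by positivity) fun s hs => localMin_le hG <| by
    obtain ⟨hs₁, hs₂⟩ := abs_le.1 hs
    exact abs_le.2 ⟨by linarith [ht.2], by linarith [ht.1]⟩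

lemma localMin_cell_le (hG : Continuous G) {k t : ℝ}
    (ht : t ∈ Icc (b + k * w) (b + (k + 1) * w)) :
    localMin G (w / 2) (b + (k + 1 / 2) * w) ≤ G t :=
  localMin_le hG (abs_le.2 ⟨by linarith [ht.1], by linarith [ht.2]⟩)

lemma integral_localMin_le_eval_cellMinPoly (hG : Continuous G) (hw : 0 ≤ w) (n : ℕ) (L : ℝ) :
    ∫ t in b..b + n * w, localMin G w t * Real.exp (L * t)
      ≤ (cellMinPoly G b w n).eval (Real.exp (L * w)) * ∫ t in b..b + w, Real.exp (L * t) := by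
  have hcont : Continuous fun t => localMin G w t * Real.exp (L * t) :=
    ((continuous_localMin hG).comp (.prodMk_right w)).mul (by fun_prop)
  have hcell_integral (k : ℕ) : ∫ t in b + k * w..b + (k + 1 : ℕ) * w, Real.exp (L * t)
      = Real.exp (L * w) ^ k * ∫ t in b..b + w, Real.exp (L * t) := by
    have hshift := integral_comp_add_right (fun t => Real.exp (L * t)) (k * w) (a := b) (b := b + w)
    rw [show b + w + k * w = b + (k + 1 : ℕ) * w by push_cast; ring] at hshift
    rw [← hshift, ← integral_const_mul, ← Real.exp_nat_mul]
    congr with t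
    rw [← Real.exp_add]
    ring_nf
  have hsum := sum_integral_adjacent_intervals (a := fun k : ℕ => b + k * w) (n := n)
    fun k _ => hcont.intervalIntegrable (μ := MeasureTheory.volume) _ _
  simp only [Nat.cast_zero, zero_mul, add_zero] at hsum
  rw [← hsum, cellMinPoly, eval_finsetSum, Finset.sum_mul]
  refine Finset.sum_le_sum fun k _ => ?_
  rw [eval_mul, eval_C, eval_pow, eval_X, mul_assoc, ← hcell_integral, ← integral_const_mul]
  refine integral_mono_on ?_ (hcont.intervalIntegrable _ _)
    (Continuous.intervalIntegrable (by fun_prop) _ _) fun t ht => ?_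
  · push_cast; linarith
  · push_cast at ht
    exact mul_le_mul_of_nonneg_right (localMin_le_localMin_cell hG hw ht) (Real.exp_pos _).le

lemma coeff_one_add_X_pow_mul (P : ℝ[X]) (N k : ℕ) :
    ((1 + X) ^ N * P).coeff k
      = ∑ j ∈ Finset.range (N + 1), N.choose j * if j ≤ k then P.coeff (k - j) else 0 := by
  rw [add_comm, add_pow, Finset.sum_mul, finsetSum_coeff]
  refine Finset.sum_congr rfl fun j _ => ?_
  rw [one_pow, mul_one, mul_right_comm, coeff_mul_natCast, coeff_X_pow_mul', mul_comm]

/-- `P` is chosen such that `(1 + X) ^ N * P` has nonnegative coefficients; the sum dominates the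
coefficient of index `⌊(t - b) / w⌋`. -/
lemma sum_choose_mul_nonneg_of_coeff_nonneg (hG : Continuous G) (hw : 0 < w) {n N : ℕ}
    (hG_lt : ∀ t, t < b → 0 ≤ G t) (hG_ge : ∀ t, b + n * w ≤ t → 0 ≤ G t)
    (hN : ∀ k, 0 ≤ ((1 + X) ^ N * cellMinPoly G b w n).coeff k) (t : ℝ) :
    0 ≤ ∑ j ∈ Finset.range (N + 1), N.choose j * G (t - j * w) := by
  rcases lt_or_ge t b with htb | htb
  · exact Finset.sum_nonneg fun j _ => mul_nonneg (Nat.cast_nonneg _)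
      (hG_lt _ (by nlinarith [(Nat.cast_nonneg j : (0 : ℝ) ≤ j)]))
  set k := ⌊(t - b) / w⌋₊
  have hk_le : b + k * w ≤ t := by
    have := Nat.floor_le (div_nonneg (sub_nonneg.2 htb) hw.le)
    rw [le_div_iff₀ hw] at this
    linarith
  have hk_lt : t < b + (k + 1) * w := by
    have := Nat.lt_floor_add_one ((t - b) / w)
    rw [div_lt_iff₀ hw] at this
    linarith
  refine (hN k).trans ?_
  rw [coeff_one_add_X_pow_mul]
  refine Finset.sum_le_sum fun j _ => mul_le_mul_of_nonneg_left ?_ (Nat.cast_nonneg _)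
  split_ifs with hjk
  · have hcast : ((k - j : ℕ) : ℝ) = k - j := Nat.cast_sub hjk
    rw [coeff_cellMinPoly]
    split_ifs with hn
    · exact localMin_cell_le hG ⟨by rw [hcast]; linarith, by rw [hcast]; linarith⟩
    · have : (n : ℝ) ≤ k - j := hcast ▸ Nat.cast_le.2 (not_lt.1 hn)
      exact hG_ge _ (by nlinarith)
  · have : (k : ℝ) + 1 ≤ j := by exact_mod_cast not_le.1 hjk
    exact hG_lt _ (by nlinarith)

theorem exists_forall_sum_choose_mul_shift_nonneg (hG : Continuous G) (hbt₀ : b < t₀)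
    (ht₀ : t₀ < lo) (ht₁ : hi < t₁) (ht₁a : t₁ < a) (hba : b ≤ hi) (hlo : lo ≤ a)
    (hG_lo : ∀ t, t ≤ lo → 0 ≤ G t) (hG_hi : ∀ t, hi ≤ t → 0 ≤ G t)
    (hGt₀ : 0 < G t₀) (hGt₁ : 0 < G t₁) (hpos : ∀ L, 0 < ∫ t in b..a, G t * Real.exp (L * t)) :
    ∃ (w : ℝ) (N : ℕ), ∀ t, 0 ≤ ∑ j ∈ Finset.range (N + 1), N.choose j * G (t - j * w) := by
  have hba_lt : 0 < a - b := by linarith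
  have hlim : Tendsto (fun n : ℕ => (a - b) / n) atTop (𝓝[>] 0) :=
    tendsto_nhdsWithin_iff.2 ⟨tendsto_const_div_atTop_nhds_zero_nat _,
      (eventually_gt_atTop 0).mono fun n hn => div_pos hba_lt (Nat.cast_pos.2 hn)⟩
  obtain ⟨n, hn, hn_pos⟩ := ((hlim.eventually (eventually_forall_integral_localMin_pos hG hbt₀ ht₀
    ht₁ ht₁a hba hlo hG_lo hG_hi hGt₀ hGt₁ hpos)).and (eventually_gt_atTop 0)).exists
  set w := (a - b) / n with hw_def
  have hw : 0 < w := div_pos hba_lt (Nat.cast_pos.2 hn_pos)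
  have hnw : b + n * w = a := by rw [hw_def]; field_simp; ring
  obtain ⟨N, hN⟩ := hasPolyaMultiplier_of_eval_pos (P := cellMinPoly G b w n) fun z hz => by
    have hcells := integral_localMin_le_eval_cellMinPoly hG hw.le n (Real.log z / w) (b := b)
    rw [div_mul_cancel₀ _ hw.ne', Real.exp_log hz, hnw] at hcells
    exact pos_of_mul_pos_left ((hn _).trans_le hcells)
      (integral_nonneg (by linarith) fun t _ => (Real.exp_pos _).le)
  exact ⟨w, N, sum_choose_mul_nonneg_of_coeff_nonneg hG hw (fun t ht => hG_lo t (by linarith))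
    (fun t ht => hG_hi t (by linarith)) hN⟩

end Discretization

section Renyi

variable {ι κ : Type*} [Fintype ι] [Fintype κ]

lemma fDiv_mulVec_le {Λ : Matrix κ ι ℝ} (hΛ : ColStochastic Λ) {p q : ι → ℝ}
    (hq : ∀ i, 0 < q i) (hΛq : ∀ j, 0 < Λ.mulVec q j) {S : Set ℝ} (hS : ∀ i, p i / q i ∈ S)
    {f : ℝ → ℝ} (hf : ConvexOn ℝ S f) :
    fDiv f (Λ.mulVec p) (Λ.mulVec q) ≤ fDiv f p q := by
  have hjensen (j : κ) : Λ.mulVec q j * f (Λ.mulVec p j / Λ.mulVec q j)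
      ≤ ∑ i, Λ j i * (q i * f (p i / q i)) := by
    have h := hf.map_centerMass_le (t := Finset.univ) (w := fun i => Λ j i * q i)
      (p := fun i => p i / q i) (fun i _ => mul_nonneg (hΛ.1 j i) (hq i).le) (hΛq j)
      fun i _ => hS i
    have hp : ∀ i, Λ j i * q i * (p i / q i) = Λ j i * p i := fun i => by
      rw [mul_assoc, mul_div_cancel₀ _ (hq i).ne']
    simp only [Finset.centerMass, smul_eq_mul, Function.comp_apply, hp] at h
    rw [inv_mul_eq_div, inv_mul_eq_div] at h
    simp only [mul_assoc] at h
    exact (le_div_iff₀' (hΛq j)).1 h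
  calc fDiv f (Λ.mulVec p) (Λ.mulVec q)
      ≤ ∑ j, ∑ i, Λ j i * (q i * f (p i / q i)) := Finset.sum_le_sum fun j _ => hjensen j
    _ = ∑ i, (∑ j, Λ j i) * (q i * f (p i / q i)) := by
        rw [Finset.sum_comm]
        simp only [Finset.sum_mul]
    _ = fDiv f p q := by simp only [hΛ.2, one_mul, fDiv]

lemma sum_mulVec {Λ : Matrix κ ι ℝ} (hΛ : ColStochastic Λ) (p : ι → ℝ) :
    ∑ j, Λ.mulVec p j = ∑ i, p i := by
  simp only [Matrix.mulVec, dotProduct]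
  rw [Finset.sum_comm]
  simp only [← Finset.sum_mul, hΛ.2, one_mul]

lemma convexOn_rpow_div {α : ℝ} (h₀ : α ≠ 0) (h₁ : α ≠ 1) :
    ConvexOn ℝ (Set.Ioi 0) fun x : ℝ => x ^ α / (α * (α - 1)) := by
  have h₁' : α - 1 ≠ 0 := sub_ne_zero.2 h₁
  have hderiv : ∀ x ∈ Set.Ioi (0 : ℝ), HasDerivAt (fun x => x ^ α / (α * (α - 1)))
      (x ^ (α - 1) / (α - 1)) x := fun x hx =>
    ((Real.hasDerivAt_rpow_const (.inl (ne_of_gt hx))).div_const _).congr_deriv (by field_simp)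
  have hderiv₂ : ∀ x ∈ Set.Ioi (0 : ℝ), HasDerivAt (fun x => x ^ (α - 1) / (α - 1))
      (x ^ (α - 1 - 1)) x := fun x hx =>
    ((Real.hasDerivAt_rpow_const (.inl (ne_of_gt hx))).div_const _).congr_deriv (by field_simp)
  refine convexOn_of_hasDerivWithinAt2_nonneg (convex_Ioi 0)
    (fun x hx => (hderiv x hx).continuousAt.continuousWithinAt) ?_ ?_ ?_
    (f' := fun x => x ^ (α - 1) / (α - 1)) (f'' := fun x => x ^ (α - 1 - 1)) <;>
    rw [interior_Ioi]
  · exact fun x hx => (hderiv x hx).hasDerivWithinAt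
  · exact fun x hx => (hderiv₂ x hx).hasDerivWithinAt
  · exact fun x hx => Real.rpow_nonneg (le_of_lt hx) _

lemma rpow_mul_rpow_one_sub {x y : ℝ} (hx : 0 < x) (hy : 0 < y) (α : ℝ) :
    x ^ α * y ^ (1 - α) = y * (x / y) ^ α := by
  rw [Real.rpow_sub hy, Real.rpow_one, Real.div_rpow hx.le hy.le]
  ring

lemma sum_rpow0_mul_rpow0 {p q : ι → ℝ} (hp : ∀ i, 0 < p i) (hq : ∀ i, 0 < q i) (α : ℝ) :
    ∑ i, rpow0 (p i) α * rpow0 (q i) (1 - α) = fDiv (· ^ α) p q :=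
  Finset.sum_congr rfl fun i _ => by
    rw [rpow0, rpow0, if_neg (hp i).ne', if_neg (hq i).ne', rpow_mul_rpow_one_sub (hp i) (hq i)]

lemma fDiv_rpow_pos [Nonempty ι] {p q : ι → ℝ} (hp : ∀ i, 0 < p i) (hq : ∀ i, 0 < q i) (α : ℝ) :
    0 < fDiv (· ^ α) p q :=
  Finset.sum_pos (fun i _ => mul_pos (hq i) (Real.rpow_pos_of_pos (div_pos (hp i) (hq i)) α))
    Finset.univ_nonempty

lemma renyiD_one {p q : ι → ℝ} (hq : ∀ i, 0 < q i) :
    renyiD 1 p q = fDiv (fun x => x * Real.log x) p q := by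
  rw [renyiD, if_pos rfl, fDiv]
  exact Finset.sum_congr rfl fun i _ => by rw [← mul_assoc, mul_div_cancel₀ _ (hq i).ne']

lemma renyiD_zero {p q : ι → ℝ} (hp : ∀ i, 0 < p i) (hq : ∀ i, 0 < q i) :
    renyiD 0 p q = -Real.log (∑ i, q i) := by
  rw [renyiD, if_neg zero_ne_one, if_neg (lt_irrefl 0), sum_rpow0_mul_rpow0 hp hq]
  simp [fDiv]

/-- The prefactor of `renyiD α` has the sign of `α * (α - 1)`, so the Rényi divergence is an
increasing function of the `f`-divergence of the convex function `x ↦ x ^ α / (α * (α - 1))`. -/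
theorem renyiD_le_renyiD_iff [Nonempty ι] [Nonempty κ] {α : ℝ} (h₀ : α ≠ 0) (h₁ : α ≠ 1)
    {p q : ι → ℝ} {p' q' : κ → ℝ} (hp : ∀ i, 0 < p i) (hq : ∀ i, 0 < q i)
    (hp' : ∀ j, 0 < p' j) (hq' : ∀ j, 0 < q' j) :
    renyiD α p' q' ≤ renyiD α p q ↔
      fDiv (fun x => x ^ α / (α * (α - 1))) p' q' ≤ fDiv (fun x => x ^ α / (α * (α - 1))) p q := by
  have hS := fDiv_rpow_pos hp hq α
  have hS' := fDiv_rpow_pos hp' hq' α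
  have hdiv : fDiv (fun x => x ^ α / (α * (α - 1))) p q = fDiv (· ^ α) p q / (α * (α - 1)) := by
    simp only [fDiv, mul_div_assoc', Finset.sum_div]
  have hdiv' : fDiv (fun x => x ^ α / (α * (α - 1))) p' q'
      = fDiv (· ^ α) p' q' / (α * (α - 1)) := by
    simp only [fDiv, mul_div_assoc', Finset.sum_div]
  rw [hdiv, hdiv', renyiD, renyiD, if_neg h₁, if_neg h₁, sum_rpow0_mul_rpow0 hp hq,
    sum_rpow0_mul_rpow0 hp' hq']
  rcases lt_or_gt_of_ne h₀ with hneg | hpos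
  · rw [if_pos hneg, if_pos hneg, mul_le_mul_iff_right₀ (one_div_pos.2 (by linarith)),
      Real.log_le_log_iff hS' hS, div_le_div_iff_of_pos_right (by nlinarith)]
  · rw [if_neg hpos.not_gt, if_neg hpos.not_gt]
    rcases lt_or_gt_of_ne h₁ with hlt | hgt
    · rw [mul_le_mul_left_of_neg (one_div_neg.2 (by linarith)), Real.log_le_log_iff hS hS',
        div_le_div_right_of_neg (by nlinarith)]
    · rw [mul_le_mul_iff_right₀ (one_div_pos.2 (by linarith)), Real.log_le_log_iff hS' hS,
        div_le_div_iff_of_pos_right (by nlinarith)]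

theorem renyiD_mulVec_le [Nonempty ι] [Nonempty κ] {Λ : Matrix κ ι ℝ} (hΛ : ColStochastic Λ)
    {p q : ι → ℝ} (hp : ∀ i, 0 < p i) (hq : ∀ i, 0 < q i) (hΛp : ∀ j, 0 < Λ.mulVec p j)
    (hΛq : ∀ j, 0 < Λ.mulVec q j) (α : ℝ) :
    renyiD α (Λ.mulVec p) (Λ.mulVec q) ≤ renyiD α p q := by
  have hratio : ∀ i, p i / q i ∈ Set.Ioi 0 := fun i => div_pos (hp i) (hq i)
  rcases eq_or_ne α 0 with rfl | h₀
  · rw [renyiD_zero hp hq, renyiD_zero hΛp hΛq, sum_mulVec hΛ]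
  rcases eq_or_ne α 1 with rfl | h₁
  · rw [renyiD_one hq, renyiD_one hΛq]
    exact fDiv_mulVec_le hΛ hq hΛq hratio
      (Real.convexOn_mul_log.subset Set.Ioi_subset_Ici_self (convex_Ioi 0))
  · rw [renyiD_le_renyiD_iff h₀ h₁ hp hq hΛp hΛq]
    exact fDiv_mulVec_le hΛ hq hΛq hratio (convexOn_rpow_div h₀ h₁)

theorem renyiD_tensorVec [Nonempty ι] [Nonempty κ] {p q : ι → ℝ} {r s : κ → ℝ}
    (hp : ∀ i, 0 < p i) (hq : ∀ i, 0 < q i) (hr : ∀ j, 0 < r j) (hs : ∀ j, 0 < s j)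
    (hp_sum : ∑ i, p i = 1) (hr_sum : ∑ j, r j = 1) (α : ℝ) :
    renyiD α (tensorVec p r) (tensorVec q s) = renyiD α p q + renyiD α r s := by
  have hpr : ∀ x, 0 < tensorVec p r x := fun x => mul_pos (hp _) (hr _)
  have hqs : ∀ x, 0 < tensorVec q s x := fun x => mul_pos (hq _) (hs _)
  rcases eq_or_ne α 1 with rfl | h₁
  · have hlog (x : ι × κ) : tensorVec p r x * Real.log (tensorVec p r x / tensorVec q s x)
        = p x.1 * Real.log (p x.1 / q x.1) * r x.2
          + p x.1 * (r x.2 * Real.log (r x.2 / s x.2)) := by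
      rw [tensorVec, tensorVec, mul_div_mul_comm, Real.log_mul (div_pos (hp _) (hq _)).ne'
        (div_pos (hr _) (hs _)).ne']
      ring
    simp only [renyiD, if_true, hlog]
    rw [Finset.sum_add_distrib, Fintype.sum_prod_type, Fintype.sum_prod_type]
    simp only
    rw [← Finset.sum_mul_sum, ← Finset.sum_mul_sum, hp_sum, hr_sum, mul_one, one_mul]
  · have hmul : fDiv (· ^ α) (tensorVec p r) (tensorVec q s)
        = fDiv (· ^ α) p q * fDiv (· ^ α) r s := by
      rw [fDiv, fDiv, fDiv, Fintype.sum_prod_type, Finset.sum_mul_sum]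
      refine Finset.sum_congr rfl fun i _ => Finset.sum_congr rfl fun j _ => ?_
      rw [tensorVec, tensorVec, mul_div_mul_comm, Real.mul_rpow (div_pos (hp i) (hq i)).le
        (div_pos (hr j) (hs j)).le]
      ring
    simp only [renyiD, if_neg h₁, sum_rpow0_mul_rpow0 hpr hqs, sum_rpow0_mul_rpow0 hp hq,
      sum_rpow0_mul_rpow0 hr hs, hmul, Real.log_mul (fDiv_rpow_pos hp hq α).ne'
      (fDiv_rpow_pos hr hs α).ne']
    split_ifs <;> ring

lemma continuousAt_renyiD [Nonempty ι] {p q : ι → ℝ} (hp : ∀ i, 0 < p i) (hq : ∀ i, 0 < q i)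
    (α : ℝ) : ContinuousAt (fun v => renyiD α v q) p := by
  rcases eq_or_ne α 1 with rfl | h₁
  · simp only [renyiD_one hq, fDiv]
    refine (continuous_finsetSum _ fun i _ => ?_).continuousAt
    have hratio : Continuous fun v : ι → ℝ => v i / q i := by fun_prop
    exact (Real.continuous_mul_log.comp hratio).const_mul (q i)
  · have hpos : ∀ᶠ v in 𝓝 p, ∀ i, 0 < v i :=
      eventually_all.2 fun i => (continuous_apply i).continuousAt.eventually (lt_mem_nhds (hp i))
    have hlog : ContinuousAt (fun v => Real.log (fDiv (· ^ α) v q)) p := by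
      refine ContinuousAt.log ?_ (fDiv_rpow_pos hp hq α).ne'
      refine tendsto_finsetSum _ fun i _ => Tendsto.const_mul _ ?_
      have hratio : Continuous fun v : ι → ℝ => v i / q i := by fun_prop
      exact hratio.continuousAt.rpow_const (.inl (div_pos (hp i) (hq i)).ne')
    refine ContinuousAt.congr (f := fun v => (if α < 0 then 1 / (1 - α) else 1 / (α - 1)) *
      Real.log (fDiv (· ^ α) v q)) (hlog.const_mul _) ?_
    filter_upwards [hpos] with v hv
    rw [renyiD, if_neg h₁, sum_rpow0_mul_rpow0 hv hq]
    split_ifs <;> rfl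

end Renyi

section CatalyticConversion

variable {ι κ : Type*} [Fintype ι]

/-- `p` can be converted into `p'` by a stochastic matrix that preserves the reference `q`, with the
help of a catalyst `r` which has reference `s` and is returned unchanged and uncorrelated. -/
def CatalyticallyConvertible (q p p' : ι → ℝ) : Prop :=
  ∃ (m : ℕ) (r s : Fin m → ℝ), IsProbVec r ∧ IsProbVec s ∧ (∀ j, 0 < s j) ∧
    ∃ Λ : Matrix (ι × Fin m) (ι × Fin m) ℝ, ColStochastic Λ ∧
      Λ.mulVec (tensorVec q s) = tensorVec q s ∧ Λ.mulVec (tensorVec p r) = tensorVec p' r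

lemma entry_eq_zero_of_mulVec_eq_zero {Λ : Matrix κ ι ℝ} (hΛ : ∀ j i, 0 ≤ Λ j i) {p : ι → ℝ}
    (hp : ∀ i, 0 ≤ p i) {j : κ} (hj : Λ.mulVec p j = 0) {i : ι} (hi : 0 < p i) : Λ j i = 0 := by
  have hterm := (Finset.sum_eq_zero_iff_of_nonneg fun i _ => mul_nonneg (hΛ j i) (hp i)).1 hj i
    (Finset.mem_univ i)
  exact (mul_eq_zero.1 hterm).resolve_right hi.ne'

variable [Fintype κ]

lemma colStochastic_submatrix {Λ : Matrix ι ι ℝ} (hΛ : ColStochastic Λ) {e : κ → ι}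
    (he : e.Injective) (hzero : ∀ i ∉ Set.range e, ∀ k, Λ i (e k) = 0) :
    ColStochastic (Λ.submatrix e e) :=
  ⟨fun _ _ => hΛ.1 _ _, fun k => (Fintype.sum_of_injective e he _ (fun i => Λ i (e k))
    (fun i hi => hzero i hi k) fun _ => rfl).trans (hΛ.2 (e k))⟩

lemma submatrix_mulVec_comp {Λ : Matrix ι ι ℝ} {e : κ → ι} (he : e.Injective) {p : ι → ℝ}
    (hp : ∀ i ∉ Set.range e, p i = 0) :
    (Λ.submatrix e e).mulVec (p ∘ e) = Λ.mulVec p ∘ e :=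
  funext fun _ => Fintype.sum_of_injective e he _ _ (fun i hi => by rw [hp i hi, mul_zero])
    fun _ => rfl

/-- Row by row the submatrix can only lose mass, but its columns sum to `1`. -/
lemma submatrix_mulVec_comp_of_mulVec_eq {Λ : Matrix ι ι ℝ} (hΛ : ColStochastic Λ) {e : κ → ι}
    (he : e.Injective) (hzero : ∀ i ∉ Set.range e, ∀ k, Λ i (e k) = 0) {q : ι → ℝ}
    (hq : ∀ i, 0 ≤ q i) (hΛq : Λ.mulVec q = q) :
    (Λ.submatrix e e).mulVec (q ∘ e) = q ∘ e := by
  have hle (k : κ) : (Λ.submatrix e e).mulVec (q ∘ e) k ≤ (q ∘ e) k :=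
    calc ∑ l, Λ (e k) (e l) * q (e l)
        = ∑ i ∈ Finset.univ.map ⟨e, he⟩, Λ (e k) i * q i := by rw [Finset.sum_map]; rfl
      _ ≤ ∑ i, Λ (e k) i * q i := Finset.sum_le_univ_sum_of_nonneg fun i =>
          mul_nonneg (hΛ.1 _ _) (hq i)
      _ = q (e k) := congrFun hΛq (e k)
  exact funext fun k => (Finset.sum_eq_sum_iff_of_le fun k _ => hle k).1
    (sum_mulVec (colStochastic_submatrix hΛ he hzero) _) k (Finset.mem_univ k)

lemma renyiD_comp_le_of_mulVec_eq [Nonempty κ] {Λ : Matrix ι ι ℝ} (hΛ : ColStochastic Λ)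
    {e : κ → ι} (he : e.Injective) {p p' q : ι → ℝ} (hp : ∀ k, 0 < p (e k))
    (hp' : ∀ k, 0 < p' (e k)) (hp_zero : ∀ i ∉ Set.range e, p i = 0)
    (hp'_zero : ∀ i ∉ Set.range e, p' i = 0) (hq : ∀ i, 0 < q i) (hΛp : Λ.mulVec p = p')
    (hΛq : Λ.mulVec q = q) (α : ℝ) :
    renyiD α (p' ∘ e) (q ∘ e) ≤ renyiD α (p ∘ e) (q ∘ e) := by
  have hp_nonneg (i : ι) : 0 ≤ p i := by
    by_cases hi : i ∈ Set.range e
    · obtain ⟨k, rfl⟩ := hi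
      exact (hp k).le
    · exact (hp_zero i hi).ge
  have hzero : ∀ i ∉ Set.range e, ∀ k, Λ i (e k) = 0 := fun i hi k =>
    entry_eq_zero_of_mulVec_eq_zero hΛ.1 hp_nonneg (by rw [hΛp, hp'_zero i hi]) (hp k)
  have hmap_p : (Λ.submatrix e e).mulVec (p ∘ e) = p' ∘ e := by
    rw [submatrix_mulVec_comp he hp_zero, hΛp]
  have hmap_q : (Λ.submatrix e e).mulVec (q ∘ e) = q ∘ e :=
    submatrix_mulVec_comp_of_mulVec_eq hΛ he hzero (fun i => (hq i).le) hΛq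
  have hdpi := renyiD_mulVec_le (colStochastic_submatrix hΛ he hzero) (p := p ∘ e) (q := q ∘ e)
    hp (fun k => hq _) (fun k => by rw [hmap_p]; exact hp' k)
    (fun k => by rw [hmap_q]; exact hq _) α
  rwa [hmap_p, hmap_q] at hdpi

lemma nonempty_of_sum_eq_one {p : ι → ℝ} (hp : ∑ i, p i = 1) : Nonempty ι :=
  not_isEmpty_iff.1 fun _ => by simp at hp

/-- The catalyst `r` may have zeros, so the conversion is first restricted to its support, where
additivity of the Rényi divergence makes the catalyst cancel. -/
theorem CatalyticallyConvertible.renyiD_le {q p p' : ι → ℝ}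
    (h : CatalyticallyConvertible q p p') (hq : ∀ i, 0 < q i) (hp : ∀ i, 0 < p i)
    (hp_sum : ∑ i, p i = 1) (hp' : ∀ i, 0 < p' i) (hp'_sum : ∑ i, p' i = 1) (α : ℝ) :
    renyiD α p' q ≤ renyiD α p q := by
  obtain ⟨m, r, s, hr, -, hs, Λ, hΛ, hΛq, hΛp⟩ := h
  let e : ι × {j // r j ≠ 0} → ι × Fin m := Prod.map id Subtype.val
  have he : e.Injective := Function.injective_id.prodMap Subtype.val_injective
  have hr_pos : ∀ k : {j // r j ≠ 0}, 0 < r k := fun k => (hr.1 k).lt_of_ne' k.2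
  have hr_sum : ∑ k : {j // r j ≠ 0}, r k = 1 :=
    (Fintype.sum_of_injective _ Subtype.val_injective _ r (fun j hj => by simpa using hj)
      fun _ => rfl).trans hr.2
  have hzero (v : ι → ℝ) : ∀ x ∉ Set.range e, tensorVec v r x = 0 := fun x hx => by
    by_contra hvr
    exact hx ⟨(x.1, ⟨x.2, right_ne_zero_of_mul hvr⟩), rfl⟩
  have := nonempty_of_sum_eq_one hp_sum
  have := nonempty_of_sum_eq_one hr_sum
  have hrestrict := renyiD_comp_le_of_mulVec_eq hΛ he (q := tensorVec q s)
    (fun y => mul_pos (hp _) (hr_pos y.2))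
    (fun y => mul_pos (hp' _) (hr_pos y.2)) (hzero p) (hzero p')
    (fun x => mul_pos (hq _) (hs _)) hΛp hΛq α
  have hadd (v : ι → ℝ) (hv : ∀ i, 0 < v i) (hv_sum : ∑ i, v i = 1) :
      renyiD α (tensorVec v r ∘ e) (tensorVec q s ∘ e)
        = renyiD α v q + renyiD α (fun k : {j // r j ≠ 0} => r k) fun k => s k :=
    renyiD_tensorVec hv hq hr_pos (fun k => hs k) hv_sum hr_sum α
  rw [hadd p' hp' hp'_sum, hadd p hp hp_sum] at hrestrict
  exact le_of_add_le_add_right hrestrict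

lemma dist_le_two_mul_traceDist (p p' : ι → ℝ) : dist p p' ≤ 2 * traceDist p p' := by
  have hsum : 2 * traceDist p p' = ∑ i, |p i - p' i| := by rw [traceDist]; ring
  rw [hsum]
  exact (dist_pi_le_iff (Finset.sum_nonneg fun _ _ => abs_nonneg _)).2 fun i =>
    Finset.single_le_sum (f := fun i => |p i - p' i|) (fun _ _ => abs_nonneg _) (Finset.mem_univ i)

theorem renyiD_le_of_forall_exists_catalyticallyConvertible {q p p' : ι → ℝ}
    (hq : ∀ i, 0 < q i) (hp : ∀ i, 0 < p i) (hp_sum : ∑ i, p i = 1) (hp' : ∀ i, 0 < p' i)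
    (h : ∀ ε > 0, ∃ p'', IsProbVec p'' ∧ traceDist p'' p' ≤ ε ∧ CatalyticallyConvertible q p p'')
    (α : ℝ) : renyiD α p' q ≤ renyiD α p q := by
  have := nonempty_of_sum_eq_one hp_sum
  have hreach : ∃ᶠ v in 𝓝 p', IsProbVec v ∧ CatalyticallyConvertible q p v :=
    Metric.nhds_basis_closedBall.frequently_iff.2 fun ε hε => by
      obtain ⟨v, hv, hvp', hconv⟩ := h (ε / 2) (half_pos hε)
      exact ⟨v, (dist_le_two_mul_traceDist v p').trans (by linarith), hv, hconv⟩
  have hpos : ∀ᶠ v in 𝓝 p', ∀ i, 0 < v i :=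
    eventually_all.2 fun i => (continuous_apply i).continuousAt.eventually (lt_mem_nhds (hp' i))
  exact le_of_tendsto_of_frequently (continuousAt_renyiD hp' hq α)
    ((hreach.and_eventually hpos).mono fun v ⟨⟨hv, hconv⟩, hv_pos⟩ =>
      hconv.renyiD_le hq hp hp_sum hv_pos hv.2 α)

end CatalyticConversion

section HockeyStick

variable {ι : Type*} [Fintype ι] {p q : ι → ℝ} {τ : ℝ}

lemma continuous_hockeyStick (p q : ι → ℝ) : Continuous (hockeyStick p q) := by
  unfold hockeyStick
  fun_prop

lemma hockeyStick_nonneg (p q : ι → ℝ) (τ : ℝ) : 0 ≤ hockeyStick p q τ :=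
  Finset.sum_nonneg fun _ _ => le_max_right _ _

lemma sum_sub_le_hockeyStick (p q : ι → ℝ) (τ : ℝ) :
    ∑ i, p i - τ * ∑ i, q i ≤ hockeyStick p q τ := by
  rw [Finset.mul_sum, ← Finset.sum_sub_distrib]
  exact Finset.sum_le_sum fun i _ => le_max_left _ _

lemma hockeyStick_pos {i : ι} (h : τ * q i < p i) : 0 < hockeyStick p q τ :=
  Finset.sum_pos' (fun _ _ => le_max_right _ _)
    ⟨i, Finset.mem_univ i, lt_max_of_lt_left (sub_pos.2 h)⟩

lemma sum_sub_lt_hockeyStick {i : ι} (h : p i < τ * q i) :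
    ∑ i, p i - τ * ∑ i, q i < hockeyStick p q τ := by
  rw [Finset.mul_sum, ← Finset.sum_sub_distrib]
  exact Finset.sum_lt_sum (fun i _ => le_max_left _ _)
    ⟨i, Finset.mem_univ i, lt_max_of_lt_right (sub_neg.2 h)⟩

lemma hockeyStick_eq_zero (h : ∀ i, p i ≤ τ * q i) : hockeyStick p q τ = 0 :=
  Finset.sum_eq_zero fun i _ => max_eq_right (sub_nonpos.2 (h i))

lemma hockeyStick_eq_sum_sub (h : ∀ i, τ * q i ≤ p i) :
    hockeyStick p q τ = ∑ i, p i - τ * ∑ i, q i := by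
  rw [Finset.mul_sum, ← Finset.sum_sub_distrib]
  exact Finset.sum_congr rfl fun i _ => max_eq_left (sub_nonneg.2 (h i))

lemma hockeyStick_self_le (hq : ∀ i, 0 ≤ q i) (hpq : ∑ i, p i = ∑ i, q i) (τ : ℝ) :
    hockeyStick q q τ ≤ hockeyStick p q τ := by
  rcases le_total τ 1 with hτ | hτ
  · rw [hockeyStick_eq_sum_sub fun i => mul_le_of_le_one_left (hq i) hτ, ← hpq]
    exact (sum_sub_le_hockeyStick p q τ).trans_eq' (by rw [hpq])
  · rw [hockeyStick_eq_zero fun i => le_mul_of_one_le_left (hq i) hτ]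
    exact hockeyStick_nonneg p q τ

lemma convexOn_hockeyStick (q : ι → ℝ) (τ : ℝ) :
    ConvexOn ℝ Set.univ fun p => hockeyStick p q τ := by
  refine ⟨convex_univ, fun p _ p' _ a b ha hb hab => ?_⟩
  simp only [hockeyStick, smul_eq_mul, Finset.mul_sum, ← Finset.sum_add_distrib, Pi.add_apply,
    Pi.smul_apply]
  refine Finset.sum_le_sum fun i _ => ?_
  calc max (a * p i + b * p' i - τ * q i) 0
      = max (a * (p i - τ * q i) + b * (p' i - τ * q i)) (0 + 0) := by
        rw [add_zero]
        congr 1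
        linear_combination (τ * q i) * hab
    _ ≤ max (a * (p i - τ * q i)) 0 + max (b * (p' i - τ * q i)) 0 :=
        max_le (add_le_add (le_max_left _ _) (le_max_left _ _))
          (add_le_add (le_max_right _ _) (le_max_right _ _))
    _ = a * max (p i - τ * q i) 0 + b * max (p' i - τ * q i) 0 := by
        rw [mul_max_of_nonneg _ _ ha, mul_max_of_nonneg _ _ hb, mul_zero, mul_zero]

end HockeyStick

section Laplace

open intervalIntegral

lemma integral_hinge_mul_exp {b x a L : ℝ} (hbx : b ≤ x) (hxa : x ≤ a) (hL₀ : L ≠ 0)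
    (hL₁ : L + 1 ≠ 0) :
    ∫ t in b..a, max (Real.exp x - Real.exp t) 0 * Real.exp (L * t)
      = Real.exp ((L + 1) * x) / ((L + 1) * L) - Real.exp x * Real.exp (L * b) / L
        + Real.exp ((L + 1) * b) / (L + 1) := by
  have hcont : Continuous fun t => max (Real.exp x - Real.exp t) 0 * Real.exp (L * t) := by fun_prop
  have hright : ∫ t in x..a, max (Real.exp x - Real.exp t) 0 * Real.exp (L * t) = 0 := by
    rw [integral_congr (g := fun _ => 0) fun t ht => ?_, integral_zero]
    rw [Set.uIcc_of_le hxa] at ht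
    simp only [max_eq_right (sub_nonpos.2 (Real.exp_le_exp.2 ht.1)), zero_mul]
  have hleft : ∫ t in b..x, max (Real.exp x - Real.exp t) 0 * Real.exp (L * t)
      = ∫ t in b..x, (Real.exp x * Real.exp (L * t) - Real.exp ((L + 1) * t)) := by
    refine integral_congr fun t ht => ?_
    rw [Set.uIcc_of_le hbx] at ht
    simp only [max_eq_left (sub_nonneg.2 (Real.exp_le_exp.2 ht.2))]
    rw [add_one_mul, Real.exp_add]
    ring
  rw [← integral_add_adjacent_intervals (hcont.intervalIntegrable b x)
    (hcont.intervalIntegrable x a), hright, hleft,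
    integral_sub (Continuous.intervalIntegrable (by fun_prop) _ _)
      (Continuous.intervalIntegrable (by fun_prop) _ _), integral_const_mul,
    integral_comp_mul_left _ hL₀, integral_comp_mul_left _ hL₁, integral_exp, integral_exp]
  have hadd : Real.exp ((L + 1) * x) = Real.exp x * Real.exp (L * x) := by
    rw [add_one_mul, Real.exp_add, mul_comm]
  simp only [smul_eq_mul, hadd]
  field_simp
  ring

variable {ι : Type*} [Fintype ι]

/-- The bilateral Laplace transform of `t ↦ hockeyStick p q (exp t)` encodes all the power sums, and
hence all the Rényi divergences. -/
lemma integral_hockeyStick_exp_mul_exp {p q : ι → ℝ} (hp : ∀ i, 0 < p i) (hq : ∀ i, 0 < q i)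
    {a b : ℝ} (hb : ∀ i, Real.exp b * q i ≤ p i) (ha : ∀ i, p i ≤ Real.exp a * q i) {L : ℝ}
    (hL₀ : L ≠ 0) (hL₁ : L + 1 ≠ 0) :
    ∫ t in b..a, hockeyStick p q (Real.exp t) * Real.exp (L * t)
      = fDiv (fun x => x ^ (L + 1) / ((L + 1) * (L + 1 - 1))) p q
        - (∑ i, p i) * Real.exp (L * b) / L + (∑ i, q i) * Real.exp ((L + 1) * b) / (L + 1) := by
  have hratio (i : ι) : Real.exp (Real.log (p i / q i)) = p i / q i :=
    Real.exp_log (div_pos (hp i) (hq i))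
  have hterm (i : ι) : ∫ t in b..a, max (p i - Real.exp t * q i) 0 * Real.exp (L * t)
      = q i * ((p i / q i) ^ (L + 1) / ((L + 1) * (L + 1 - 1)))
        - p i * Real.exp (L * b) / L + q i * Real.exp ((L + 1) * b) / (L + 1) := by
    have hhinge := integral_hinge_mul_exp (a := a) (b := b) (x := Real.log (p i / q i))
      ((Real.le_log_iff_exp_le (div_pos (hp i) (hq i))).2 ((le_div_iff₀ (hq i)).2 (hb i)))
      ((Real.log_le_iff_le_exp (div_pos (hp i) (hq i))).2 ((div_le_iff₀ (hq i)).2 (ha i))) hL₀ hL₁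
    have hscale (t : ℝ) : max (p i - Real.exp t * q i) 0 * Real.exp (L * t)
        = q i * (max (p i / q i - Real.exp t) 0 * Real.exp (L * t)) := by
      rw [← mul_assoc, mul_max_of_nonneg _ _ (hq i).le, mul_sub, mul_div_cancel₀ _ (hq i).ne',
        mul_zero, mul_comm (q i)]
    rw [hratio] at hhinge
    simp only [hscale, integral_const_mul]
    rw [hhinge, mul_comm (L + 1) (Real.log _), Real.exp_mul, hratio, add_sub_cancel_right, mul_add,
      mul_sub, ← mul_div_assoc (q i) (p i / q i * _), ← mul_assoc, mul_div_cancel₀ _ (hq i).ne',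
      ← mul_div_assoc (q i) (Real.exp _)]
  simp only [hockeyStick, Finset.sum_mul]
  rw [integral_finsetSum fun i _ => Continuous.intervalIntegrable (by fun_prop) _ _]
  simp only [hterm]
  rw [Finset.sum_add_distrib, Finset.sum_sub_distrib, Finset.sum_div, Finset.sum_div, fDiv]

theorem integral_hockeyStick_sub_nonneg_of_renyiD_le [Nonempty ι] {p p' q : ι → ℝ}
    (hp : ∀ i, 0 < p i) (hp' : ∀ i, 0 < p' i) (hq : ∀ i, 0 < q i) (hsum : ∑ i, p i = ∑ i, p' i)
    {a b : ℝ} (hb : ∀ i, Real.exp b * q i ≤ p i) (ha : ∀ i, p i ≤ Real.exp a * q i)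
    (hb' : ∀ i, Real.exp b * q i ≤ p' i) (ha' : ∀ i, p' i ≤ Real.exp a * q i)
    (h : ∀ α, renyiD α p' q ≤ renyiD α p q) (L : ℝ) :
    0 ≤ ∫ t in b..a,
      (hockeyStick p q (Real.exp t) - hockeyStick p' q (Real.exp t)) * Real.exp (L * t) := by
  have hcont := continuous_hockeyStick p q
  have hcont' := continuous_hockeyStick p' q
  have hdense : Dense ({0, -1}ᶜ : Set ℝ) := (Set.toFinite {0, -1}).countable.dense_compl ℝ
  refine hdense.induction (fun L hL => ?_) (isClosed_le continuous_const
    (continuous_parametric_intervalIntegral_of_continuous' (by fun_prop) b a)) L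
  obtain ⟨hL₀, hL₁⟩ : L ≠ 0 ∧ L ≠ -1 := by simpa using hL
  have hL₁ : L + 1 ≠ 0 := fun h => hL₁ (eq_neg_of_add_eq_zero_left h)
  have hfDiv := (renyiD_le_renyiD_iff hL₁ (by simpa using hL₀) hp hq hp' hq).1 (h (L + 1))
  simp only [sub_mul]
  rw [integral_sub (Continuous.intervalIntegrable (by fun_prop) _ _)
    (Continuous.intervalIntegrable (by fun_prop) _ _),
    integral_hockeyStick_exp_mul_exp hp hq hb ha hL₀ hL₁,
    integral_hockeyStick_exp_mul_exp hp' hq hb' ha' hL₀ hL₁, hsum]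
  linarith

end Laplace

section Endpoints

variable {ι κ : Type*} [Fintype ι] [Fintype κ]

lemma le_of_eventually_sum_mul_pow_le {w x : ι → ℝ} {w' x' : κ → ℝ} (hw : ∀ i, 0 ≤ w i)
    (hw' : ∀ j, 0 < w' j) (hx : ∀ i, 0 ≤ x i) (hx' : ∀ j, 0 ≤ x' j) {C : ℝ} (hC : 0 < C)
    (hxC : ∀ i, x i ≤ C)
    (h : ∀ᶠ n : ℕ in atTop, ∑ j, w' j * x' j ^ n ≤ ∑ i, w i * x i ^ n) (j : κ) : x' j ≤ C := by
  by_contra! hj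
  obtain ⟨n, hn, hlarge⟩ := (h.and ((tendsto_pow_atTop_atTop_of_one_lt
    ((one_lt_div hC).2 hj)).eventually_gt_atTop ((∑ i, w i) / w' j))).exists
  rw [div_pow, div_lt_div_iff₀ (hw' j) (pow_pos hC n)] at hlarge
  have hbound : w' j * x' j ^ n ≤ (∑ i, w i) * C ^ n :=
    calc w' j * x' j ^ n ≤ ∑ j, w' j * x' j ^ n :=
          Finset.single_le_sum (f := fun j => w' j * x' j ^ n)
            (fun j _ => mul_nonneg (hw' j).le (pow_nonneg (hx' j) n)) (Finset.mem_univ j)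
      _ ≤ ∑ i, w i * x i ^ n := hn
      _ ≤ ∑ i, w i * C ^ n := Finset.sum_le_sum fun i _ =>
          mul_le_mul_of_nonneg_left (pow_le_pow_left₀ (hx i) (hxC i) n) (hw i)
      _ = (∑ i, w i) * C ^ n := (Finset.sum_mul ..).symm
  linarith

variable [Nonempty ι] [Nonempty κ] {p q : ι → ℝ} {p' q' : κ → ℝ}

/-- The limit `α → ∞` of the second laws. -/
lemma le_mul_of_renyiD_le (hp : ∀ i, 0 < p i) (hq : ∀ i, 0 < q i) (hp' : ∀ j, 0 < p' j)
    (hq' : ∀ j, 0 < q' j) (h : ∀ α, renyiD α p' q' ≤ renyiD α p q) {C : ℝ} (hC : 0 < C)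
    (hpC : ∀ i, p i ≤ C * q i) (j : κ) : p' j ≤ C * q' j := by
  rw [← div_le_iff₀ (hq' j)]
  refine le_of_eventually_sum_mul_pow_le (fun i => (hq i).le) hq'
    (fun i => (div_pos (hp i) (hq i)).le) (fun j => (div_pos (hp' j) (hq' j)).le) hC
    (fun i => (div_le_iff₀ (hq i)).2 (hpC i)) ?_ j
  filter_upwards [eventually_gt_atTop 1] with n hn
  have hn' : (1 : ℝ) < n := Nat.one_lt_cast.2 hn
  have hfDiv := (renyiD_le_renyiD_iff (by positivity) hn'.ne' hp hq hp' hq').1 (h n)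
  simp only [fDiv, mul_div_assoc', ← Finset.sum_div, Real.rpow_natCast] at hfDiv
  exact (div_le_div_iff_of_pos_right (by nlinarith)).1 hfDiv

/-- The limit `α → -∞` of the second laws. -/
lemma mul_le_of_renyiD_le (hp : ∀ i, 0 < p i) (hq : ∀ i, 0 < q i) (hp' : ∀ j, 0 < p' j)
    (hq' : ∀ j, 0 < q' j) (h : ∀ α, renyiD α p' q' ≤ renyiD α p q) {C : ℝ} (hC : 0 < C)
    (hpC : ∀ i, C * q i ≤ p i) (j : κ) : C * q' j ≤ p' j := by
  rw [← le_div_iff₀ (hq' j), ← inv_le_inv₀ (div_pos (hp' j) (hq' j)) hC]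
  refine le_of_eventually_sum_mul_pow_le (x := fun i => (p i / q i)⁻¹)
    (x' := fun j => (p' j / q' j)⁻¹) (fun i => (hq i).le) hq'
    (fun i => (inv_pos.2 (div_pos (hp i) (hq i))).le)
    (fun j => (inv_pos.2 (div_pos (hp' j) (hq' j))).le) (inv_pos.2 hC)
    (fun i => inv_anti₀ hC ((le_div_iff₀ (hq i)).2 (hpC i))) ?_ j
  filter_upwards [eventually_gt_atTop 0] with n hn
  have hn' : (0 : ℝ) < n := Nat.cast_pos.2 hn
  have hfDiv := (renyiD_le_renyiD_iff (α := -n) (by linarith) (by linarith) hp hq hp' hq').1 (h _)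
  simp only [fDiv, mul_div_assoc', ← Finset.sum_div,
    Real.rpow_neg (div_pos (hp _) (hq _)).le, Real.rpow_neg (div_pos (hp' _) (hq' _)).le,
    Real.rpow_natCast] at hfDiv
  simp only [inv_pow]
  exact (div_le_div_iff_of_pos_right (by nlinarith)).1 hfDiv

end Endpoints

section Catalyst

variable {ι κ : Type*} [Fintype ι] [Fintype κ]

lemma sum_tensorVec (p : ι → ℝ) (r : κ → ℝ) :
    ∑ x, tensorVec p r x = (∑ i, p i) * ∑ j, r j := by
  rw [Fintype.sum_prod_type, Finset.sum_mul_sum]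
  rfl

lemma hockeyStick_tensorVec (p q : ι → ℝ) {r : κ → ℝ} (hr : ∀ j, 0 < r j) (s : κ → ℝ) (τ : ℝ) :
    hockeyStick (tensorVec p r) (tensorVec q s) τ
      = ∑ j, r j * hockeyStick p q (τ * (s j / r j)) := by
  rw [hockeyStick, Fintype.sum_prod_type_right]
  refine Finset.sum_congr rfl fun j _ => ?_
  rw [hockeyStick, Finset.mul_sum]
  refine Finset.sum_congr rfl fun i _ => ?_
  have := (hr j).ne'
  rw [mul_max_of_nonneg _ _ (hr j).le, mul_zero, tensorVec, tensorVec]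
  congr 1
  field_simp

lemma isProbVec_div_sum [Nonempty ι] {w : ι → ℝ} (hw : ∀ i, 0 < w i) :
    IsProbVec fun i => w i / ∑ k, w k := by
  have hsum : 0 < ∑ k, w k := Finset.sum_pos (fun i _ => hw i) Finset.univ_nonempty
  exact ⟨fun i => (div_pos (hw i) hsum).le, by rw [← Finset.sum_div, div_self hsum.ne']⟩

/-- Neither the catalyst `r` nor its reference `s` needs to be normalized: rescaling them only
rescales `τ`. -/
theorem catalyticallyConvertible_of_sum_mul_hockeyStick_le [Nonempty ι] {p p' q : ι → ℝ}
    (hp' : ∀ i, 0 ≤ p' i) (hq : ∀ i, 0 < q i) (hsum : ∑ i, p' i = ∑ i, p i)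
    {m : ℕ} [NeZero m] {r s : Fin m → ℝ} (hr : ∀ j, 0 < r j) (hs : ∀ j, 0 < s j)
    (h : ∀ τ > 0, ∑ j, r j * hockeyStick p' q (τ * (s j / r j))
      ≤ ∑ j, r j * hockeyStick p q (τ * (s j / r j))) :
    CatalyticallyConvertible q p p' := by
  have hR : 0 < ∑ j, r j := Finset.sum_pos (fun j _ => hr j) Finset.univ_nonempty
  have hS : 0 < ∑ j, s j := Finset.sum_pos (fun j _ => hs j) Finset.univ_nonempty
  set r' : Fin m → ℝ := fun j => r j / ∑ k, r k
  set s' : Fin m → ℝ := fun j => s j / ∑ k, s k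
  have hr' : ∀ j, 0 < r' j := fun j => div_pos (hr j) hR
  have hs' : ∀ j, 0 < s' j := fun j => div_pos (hs j) hS
  have hqs : ∀ x, 0 < tensorVec q s' x := fun x => mul_pos (hq _) (hs' _)
  have hscale (v : ι → ℝ) (τ : ℝ) : hockeyStick (tensorVec v r') (tensorVec q s') τ
      = (∑ j, r j * hockeyStick v q (τ * ((∑ k, r k) / ∑ k, s k) * (s j / r j))) / ∑ k, r k := by
    rw [hockeyStick_tensorVec v q hr', Finset.sum_div]
    refine Finset.sum_congr rfl fun j _ => ?_
    rw [div_div_div_comm, div_div_eq_mul_div, mul_comm (s j / r j), mul_div_right_comm, ← mul_assoc,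
      mul_div_right_comm (r j)]
  have hprod : ∑ x, tensorVec p' r' x = ∑ x, tensorVec p r' x := by
    rw [sum_tensorVec, sum_tensorVec, hsum]
  have hcurve (τ : ℝ) : hockeyStick (tensorVec p' r') (tensorVec q s') τ
      ≤ hockeyStick (tensorVec p r') (tensorVec q s') τ := by
    rcases le_or_gt τ 0 with hτ | hτ
    · rw [hockeyStick_eq_sum_sub (p := tensorVec p' r') (q := tensorVec q s') fun x =>
        (mul_nonpos_of_nonpos_of_nonneg hτ (hqs x).le).trans (mul_nonneg (hp' _) (hr' _).le), hprod]
      exact sum_sub_le_hockeyStick _ _ _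
    · rw [hscale, hscale]
      exact div_le_div_of_nonneg_right (h _ (mul_pos hτ (div_pos hR hS))) hR.le
  obtain ⟨Λ, hΛ, hΛq, hΛp⟩ := exists_colStochastic_of_hockeyStick_le hqs hqs hprod rfl hcurve
  exact ⟨m, r', s', isProbVec_div_sum hr, isProbVec_div_sum hs, hs', Λ, hΛ, hΛq, hΛp⟩

lemma catalyticallyConvertible_reference [Nonempty ι] {p q : ι → ℝ} (hq : ∀ i, 0 < q i)
    (hsum : ∑ i, q i = ∑ i, p i) : CatalyticallyConvertible q p q :=
  catalyticallyConvertible_of_sum_mul_hockeyStick_le (m := 1) (r := 1) (s := 1)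
    (fun i => (hq i).le) hq hsum (fun _ => one_pos) (fun _ => one_pos) fun _ _ =>
    Finset.sum_le_sum fun _ _ => mul_le_mul_of_nonneg_left
      (hockeyStick_self_le (fun i => (hq i).le) hsum.symm _) zero_le_one

/-- The catalyst is binomial, with weights `N.choose j`, and its reference is the catalyst tilted by
`exp (-j * w)`. -/
theorem catalyticallyConvertible_of_sum_choose_nonneg [Nonempty ι] {p p' q : ι → ℝ}
    (hp' : ∀ i, 0 ≤ p' i) (hq : ∀ i, 0 < q i) (hsum : ∑ i, p' i = ∑ i, p i)
    {w : ℝ} {N : ℕ} (h : ∀ t, 0 ≤ ∑ j ∈ Finset.range (N + 1), N.choose j *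
      (hockeyStick p q (Real.exp (t - j * w)) - hockeyStick p' q (Real.exp (t - j * w)))) :
    CatalyticallyConvertible q p p' := by
  have hchoose (j : Fin (N + 1)) : (0 : ℝ) < N.choose j :=
    Nat.cast_pos.2 (Nat.choose_pos (Nat.lt_succ_iff.1 j.2))
  refine catalyticallyConvertible_of_sum_mul_hockeyStick_le hp' hq hsum
    (r := fun j : Fin (N + 1) => N.choose j)
    (s := fun j : Fin (N + 1) => N.choose j * Real.exp (-(j * w))) hchoose
    (fun j => mul_pos (hchoose j) (Real.exp_pos _)) fun τ hτ => ?_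
  have htilt (j : Fin (N + 1)) : τ * (N.choose j * Real.exp (-(j * w)) / N.choose j)
      = Real.exp (Real.log τ - j * w) := by
    rw [mul_div_cancel_left₀ _ (hchoose j).ne', sub_eq_add_neg, Real.exp_add, Real.exp_log hτ]
  have hlog := h (Real.log τ)
  rw [← Fin.sum_univ_eq_sum_range fun j => N.choose j *
    (hockeyStick p q (Real.exp (Real.log τ - j * w))
      - hockeyStick p' q (Real.exp (Real.log τ - j * w)))] at hlog
  simp only [mul_sub, Finset.sum_sub_distrib, sub_nonneg] at hlog
  simpa only [htilt] using hlog

end Catalyst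

section Sufficiency

lemma exists_forall_exp_mul_le {ι : Type*} [Finite ι] [Nonempty ι] {p q : ι → ℝ}
    (hp : ∀ i, 0 < p i) (hq : ∀ i, 0 < q i) :
    ∃ i b, p i = Real.exp b * q i ∧ ∀ j, Real.exp b * q j ≤ p j := by
  obtain ⟨i, hi⟩ := Finite.exists_min fun i => p i / q i
  refine ⟨i, Real.log (p i / q i), ?_, fun j => ?_⟩ <;> rw [Real.exp_log (div_pos (hp i) (hq i))]
  · exact (div_mul_cancel₀ _ (hq i).ne').symm
  · exact (le_div_iff₀ (hq j)).1 (hi j)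

lemma exists_forall_le_exp_mul {ι : Type*} [Finite ι] [Nonempty ι] {p q : ι → ℝ}
    (hp : ∀ i, 0 < p i) (hq : ∀ i, 0 < q i) :
    ∃ i a, p i = Real.exp a * q i ∧ ∀ j, p j ≤ Real.exp a * q j := by
  obtain ⟨i, hi⟩ := Finite.exists_max fun i => p i / q i
  refine ⟨i, Real.log (p i / q i), ?_, fun j => ?_⟩ <;> rw [Real.exp_log (div_pos (hp i) (hq i))]
  · exact (div_mul_cancel₀ _ (hq i).ne').symm
  · exact (div_le_iff₀ (hq j)).1 (hi j)

variable {ι : Type*} [Fintype ι] {p p' q : ι → ℝ}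

theorem catalyticallyConvertible_of_integral_pos [Nonempty ι] (hp' : ∀ i, 0 ≤ p' i)
    (hq : ∀ i, 0 < q i) (hsum : ∑ i, p' i = ∑ i, p i) {b lo hi a : ℝ} {i j : ι}
    (hb : p i = Real.exp b * q i) (ha : p j = Real.exp a * q j) (hblo : b < lo) (hhia : hi < a)
    (hlo : ∀ i, Real.exp lo * q i ≤ p' i) (hhi : ∀ i, p' i ≤ Real.exp hi * q i)
    (hpos : ∀ L, 0 < ∫ t in b..a,
      (hockeyStick p q (Real.exp t) - hockeyStick p' q (Real.exp t)) * Real.exp (L * t)) :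
    CatalyticallyConvertible q p p' := by
  have hlohi : lo ≤ hi := Real.exp_le_exp.1 <|
    le_of_mul_le_mul_right ((hlo i).trans (hhi i)) (hq i)
  obtain ⟨t₀, hbt₀, ht₀⟩ := exists_between hblo
  obtain ⟨t₁, ht₁, ht₁a⟩ := exists_between hhia
  let G : ℝ → ℝ := fun t => hockeyStick p q (Real.exp t) - hockeyStick p' q (Real.exp t)
  have hcont : Continuous G :=
    ((continuous_hockeyStick p q).comp Real.continuous_exp).sub
      ((continuous_hockeyStick p' q).comp Real.continuous_exp)
  have hG_low {t : ℝ} (ht : t ≤ lo) :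
      G t = hockeyStick p q (Real.exp t) - (∑ i, p i - Real.exp t * ∑ i, q i) := by
    rw [← hsum, ← hockeyStick_eq_sum_sub fun i =>
      (mul_le_mul_of_nonneg_right (Real.exp_le_exp.2 ht) (hq i).le).trans (hlo i)]
  have hG_high {t : ℝ} (ht : hi ≤ t) : G t = hockeyStick p q (Real.exp t) :=
    sub_eq_self.2 <| hockeyStick_eq_zero fun i =>
      (hhi i).trans (mul_le_mul_of_nonneg_right (Real.exp_le_exp.2 ht) (hq i).le)
  have hGt₀ : 0 < G t₀ := by
    rw [hG_low ht₀.le, sub_pos]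
    exact sum_sub_lt_hockeyStick
      (hb.trans_lt (mul_lt_mul_of_pos_right (Real.exp_lt_exp.2 hbt₀) (hq i)))
  have hGt₁ : 0 < G t₁ := by
    rw [hG_high ht₁.le]
    exact hockeyStick_pos
      ((mul_lt_mul_of_pos_right (Real.exp_lt_exp.2 ht₁a) (hq j)).trans_eq ha.symm)
  obtain ⟨w, N, hN⟩ := exists_forall_sum_choose_mul_shift_nonneg hcont hbt₀ ht₀ ht₁ ht₁a
    (hblo.le.trans hlohi) (hlohi.trans hhia.le)
    (fun t ht => by rw [hG_low ht, sub_nonneg]; exact sum_sub_le_hockeyStick _ _ _)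
    (fun t ht => by rw [hG_high ht]; exact hockeyStick_nonneg _ _ _) hGt₀ hGt₁ hpos
  exact catalyticallyConvertible_of_sum_choose_nonneg hp' hq hsum hN

lemma traceDist_le_one (hp : IsProbVec p) (hp' : IsProbVec p') : traceDist p p' ≤ 1 := by
  have hsum : ∑ i, |p i - p' i| ≤ ∑ i, (p i + p' i) := Finset.sum_le_sum fun i _ =>
    abs_sub_le_iff.2 ⟨by linarith [hp'.1 i], by linarith [hp.1 i]⟩
  rw [Finset.sum_add_distrib, hp.2, hp'.2] at hsum
  rw [traceDist]
  linarith

lemma traceDist_mix (p q : ι → ℝ) {δ : ℝ} (hδ : 0 ≤ δ) :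
    traceDist ((1 - δ) • p + δ • q) p = δ * traceDist q p := by
  have hterm (i : ι) : ((1 - δ) • p + δ • q) i - p i = δ * (q i - p i) := by
    simp only [Pi.add_apply, Pi.smul_apply, smul_eq_mul]
    ring
  simp only [traceDist, hterm, abs_mul, abs_of_nonneg hδ, ← Finset.mul_sum]
  ring

lemma exists_lt_of_sum_eq_of_ne (hsum : ∑ i, p i = ∑ i, q i) (hne : p ≠ q) : ∃ i, p i < q i := by
  obtain ⟨i, hi⟩ := Function.ne_iff.1 hne
  obtain ⟨k, -, hk⟩ := Finset.exists_pos_of_sum_zero_of_exists_nonzero (s := Finset.univ)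
    (fun i => q i - p i) (by rw [Finset.sum_sub_distrib, hsum, sub_self])
    ⟨i, Finset.mem_univ i, sub_ne_zero.2 hi.symm⟩
  exact ⟨k, sub_pos.1 hk⟩

/-- Admixing the reference strictly lowers the hockey-stick divergence at `t = 0`. -/
lemma integral_hockeyStick_sub_mix_pos (hq : ∀ i, 0 ≤ q i) (hsum : ∑ i, p i = ∑ i, q i)
    (hne : p ≠ q) {δ : ℝ} (hδ₀ : 0 < δ) (hδ₁ : δ ≤ 1) {a b : ℝ} (hb : b < 0) (ha : 0 < a) (L : ℝ) :
    0 < ∫ t in b..a, (hockeyStick p q (Real.exp t)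
      - hockeyStick ((1 - δ) • p + δ • q) q (Real.exp t)) * Real.exp (L * t) := by
  have hmix (τ : ℝ) : hockeyStick ((1 - δ) • p + δ • q) q τ
      ≤ (1 - δ) * hockeyStick p q τ + δ * hockeyStick q q τ :=
    (convexOn_hockeyStick q τ).2 (Set.mem_univ p) (Set.mem_univ q) (sub_nonneg.2 hδ₁) hδ₀.le
      (sub_add_cancel 1 δ)
  have hcont := continuous_hockeyStick p q
  have hcont' := continuous_hockeyStick ((1 - δ) • p + δ • q) q
  refine intervalIntegral.integral_pos (hb.trans ha) (by fun_prop) (fun t _ => ?_)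
    ⟨0, ⟨hb.le, ha.le⟩, ?_⟩
  · refine mul_nonneg ?_ (Real.exp_pos _).le
    nlinarith [hmix (Real.exp t), hockeyStick_self_le hq hsum (Real.exp t)]
  · obtain ⟨i, hi⟩ := exists_lt_of_sum_eq_of_ne hsum.symm hne.symm
    have hself : hockeyStick q q 1 = 0 := hockeyStick_eq_zero fun i => (one_mul _).ge
    have hp_pos : 0 < hockeyStick p q 1 := hockeyStick_pos (by rwa [one_mul])
    refine mul_pos ?_ (Real.exp_pos _)
    rw [Real.exp_zero]
    nlinarith [hmix 1]

lemma integral_hockeyStick_sub_mix_pos_of_renyiD_le [Nonempty ι] (hp : ∀ i, 0 < p i)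
    (hp' : ∀ i, 0 < p' i) (hq : ∀ i, 0 < q i) (hsum : ∑ i, p i = ∑ i, q i)
    (hsum' : ∑ i, p' i = ∑ i, q i) (hne : p' ≠ q) {a b : ℝ} (hb : ∀ i, Real.exp b * q i ≤ p i)
    (ha : ∀ i, p i ≤ Real.exp a * q i) (hb' : ∀ i, Real.exp b * q i ≤ p' i)
    (ha' : ∀ i, p' i ≤ Real.exp a * q i) (hb₀ : b < 0) (ha₀ : 0 < a)
    (h : ∀ α, renyiD α p' q ≤ renyiD α p q) {δ : ℝ} (hδ₀ : 0 < δ) (hδ₁ : δ ≤ 1) (L : ℝ) :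
    0 < ∫ t in b..a, (hockeyStick p q (Real.exp t)
      - hockeyStick ((1 - δ) • p' + δ • q) q (Real.exp t)) * Real.exp (L * t) := by
  have hint (v v' : ι → ℝ) : IntervalIntegrable (fun t => (hockeyStick v q (Real.exp t)
      - hockeyStick v' q (Real.exp t)) * Real.exp (L * t)) MeasureTheory.volume b a := by
    have := continuous_hockeyStick v q
    have := continuous_hockeyStick v' q
    exact Continuous.intervalIntegrable (by fun_prop) b a
  refine (add_pos_of_nonneg_of_pos (integral_hockeyStick_sub_nonneg_of_renyiD_le hp hp' hq
    (hsum.trans hsum'.symm) hb ha hb' ha' h L) (integral_hockeyStick_sub_mix_pos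
    (fun i => (hq i).le) hsum' hne hδ₀ hδ₁ hb₀ ha₀ L)).trans_eq ?_
  rw [← intervalIntegral.integral_add (hint _ _) (hint _ _)]
  simp only [← add_mul, sub_add_sub_cancel]

/-- Admixing `q` makes all the inequalities strict, both in the Laplace transform and at the
endpoints. -/
theorem catalyticallyConvertible_mix_of_renyiD_le [Nonempty ι] (hp : ∀ i, 0 < p i)
    (hp' : ∀ i, 0 < p' i) (hq : ∀ i, 0 < q i) (hsum : ∑ i, p i = ∑ i, q i)
    (hsum' : ∑ i, p' i = ∑ i, q i) (hne : p' ≠ q) (h : ∀ α, renyiD α p' q ≤ renyiD α p q) {δ : ℝ}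
    (hδ₀ : 0 < δ) (hδ₁ : δ ≤ 1) : CatalyticallyConvertible q p ((1 - δ) • p' + δ • q) := by
  obtain ⟨i, b, hib, hb⟩ := exists_forall_exp_mul_le hp hq
  obtain ⟨j, a, hja, ha⟩ := exists_forall_le_exp_mul hp hq
  have hb' := mul_le_of_renyiD_le hp hq hp' hq h (Real.exp_pos b) hb
  have ha' := le_mul_of_renyiD_le hp hq hp' hq h (Real.exp_pos a) ha
  have hb₁ : Real.exp b < 1 := by
    obtain ⟨k, hk⟩ := exists_lt_of_sum_eq_of_ne hsum' hne
    exact (mul_lt_iff_lt_one_left (hq k)).1 ((hb' k).trans_lt hk)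
  have ha₁ : 1 < Real.exp a := by
    obtain ⟨k, hk⟩ := exists_lt_of_sum_eq_of_ne hsum'.symm hne.symm
    exact (lt_mul_iff_one_lt_left (hq k)).1 (hk.trans_le (ha' k))
  have hδ : 0 ≤ 1 - δ := sub_nonneg.2 hδ₁
  have hlo : Real.exp (Real.log ((1 - δ) * Real.exp b + δ)) = (1 - δ) * Real.exp b + δ :=
    Real.exp_log (by positivity)
  have hhi : Real.exp (Real.log ((1 - δ) * Real.exp a + δ)) = (1 - δ) * Real.exp a + δ :=
    Real.exp_log (by positivity)
  refine catalyticallyConvertible_of_integral_pos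
    (fun i => add_nonneg (mul_nonneg hδ (hp' i).le) (mul_pos hδ₀ (hq i)).le) hq ?_ hib hja
    (Real.exp_lt_exp.1 (by rw [hlo]; nlinarith)) (Real.exp_lt_exp.1 (by rw [hhi]; nlinarith))
    (fun k => ?_) (fun k => ?_) fun L => ?_
  · simp only [Pi.add_apply, Pi.smul_apply, smul_eq_mul, Finset.sum_add_distrib, ← Finset.mul_sum,
      hsum, hsum']
    ring
  · simp only [Pi.add_apply, Pi.smul_apply, smul_eq_mul, hlo]
    nlinarith [mul_le_mul_of_nonneg_left (hb' k) hδ]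
  · simp only [Pi.add_apply, Pi.smul_apply, smul_eq_mul, hhi]
    nlinarith [mul_le_mul_of_nonneg_left (ha' k) hδ]
  · exact integral_hockeyStick_sub_mix_pos_of_renyiD_le hp hp' hq hsum hsum' hne hb ha hb' ha'
      (Real.exp_lt_one_iff.1 hb₁) (Real.one_lt_exp_iff.1 ha₁) h hδ₀ hδ₁ L

theorem exists_catalyticallyConvertible_of_renyiD_le [Nonempty ι] (hp : IsProbVec p)
    (hp' : IsProbVec p') (hq : IsProbVec q) (hp_pos : ∀ i, 0 < p i) (hp'_pos : ∀ i, 0 < p' i)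
    (hq_pos : ∀ i, 0 < q i) (h : ∀ α, renyiD α p' q ≤ renyiD α p q) {ε : ℝ} (hε : 0 < ε) :
    ∃ p'', IsProbVec p'' ∧ traceDist p'' p' ≤ ε ∧ CatalyticallyConvertible q p p'' := by
  rcases eq_or_ne p' q with rfl | hne
  · exact ⟨p', hp', by simpa [traceDist] using hε.le,
      catalyticallyConvertible_reference hq_pos (hq.2.trans hp.2.symm)⟩
  have hδ₀ : 0 < min ε 1 := lt_min hε one_pos
  have hδ₁ : min ε 1 ≤ 1 := min_le_right ε 1
  refine ⟨(1 - min ε 1) • p' + min ε 1 • q, convex_stdSimplex ℝ ι hp' hq (sub_nonneg.2 hδ₁) hδ₀.le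
    (sub_add_cancel 1 _), ?_, catalyticallyConvertible_mix_of_renyiD_le hp_pos hp'_pos hq_pos
    (hp.2.trans hq.2.symm) (hp'.2.trans hq.2.symm) hne h hδ₀ hδ₁⟩
  calc traceDist _ p' = min ε 1 * traceDist q p' := traceDist_mix p' q hδ₀.le
    _ ≤ min ε 1 := mul_le_of_le_one_right hδ₀.le (traceDist_le_one hq hp')
    _ ≤ ε := min_le_left ε 1

end Sufficiency

theorem secondLaws_blockDiagonal_general {ι : Type*} [Fintype ι] {q p p' : ι → ℝ}
    (hq : IsProbVec q) (hp : IsProbVec p) (hp' : IsProbVec p') (hq_pos : ∀ i, 0 < q i)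
    (hp_pos : ∀ i, 0 < p i) (hp'_pos : ∀ i, 0 < p' i) :
    (∀ α, renyiD α p' q ≤ renyiD α p q) ↔
      ∀ ε > 0, ∃ (m : ℕ) (r s : Fin m → ℝ), IsProbVec r ∧ IsProbVec s ∧ (∀ j, 0 < s j) ∧
        ∃ Λ : Matrix (ι × Fin m) (ι × Fin m) ℝ, ColStochastic Λ ∧
          Λ.mulVec (tensorVec q s) = tensorVec q s ∧
          ∃ p'', IsProbVec p'' ∧ traceDist p'' p' ≤ ε ∧
            Λ.mulVec (tensorVec p r) = tensorVec p'' r := by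
  have := nonempty_of_sum_eq_one hp.2
  constructor
  · intro h ε hε
    obtain ⟨p'', hp'', hdist, m, r, s, hr, hs, hs_pos, Λ, hΛ, hΛq, hΛp⟩ :=
      exists_catalyticallyConvertible_of_renyiD_le hp hp' hq hp_pos hp'_pos hq_pos h hε
    exact ⟨m, r, s, hr, hs, hs_pos, Λ, hΛ, hΛq, p'', hp'', hdist, hΛp⟩
  · intro h
    refine renyiD_le_of_forall_exists_catalyticallyConvertible hq_pos hp_pos hp.2 hp'_pos
      fun ε hε => ?_
    obtain ⟨m, r, s, hr, hs, hs_pos, Λ, hΛ, hΛq, p'', hp'', hdist, hΛp⟩ := h ε hε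
    exact ⟨p'', hp'', hdist, m, r, s, hr, hs, hs_pos, Λ, hΛ, hΛq, hΛp⟩

/-- **Second laws for block-diagonal states (Theorem 3, classical form).** For strictly positive
probability vectors `p, p'` and the Gibbs distribution `q`, monotonicity of all Rényi divergences
`D_α(p‖q) ≥ D_α(p'‖q)` for `α ∈ (-∞,∞)` is equivalent to the existence, for every `ε > 0`, of a
catalyst `r` (with strictly positive Gibbs-like reference `s`) and a Gibbs-stochastic map sending
`p ⊗ r` to `p'' ⊗ r` with `d(p'', p') ≤ ε`. -/
theorem secondLaws_blockDiagonal {d : ℕ} (β : ℝ) (hβ : 0 < β) (E : Fin d → ℝ)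
    (Z : ℝ) (hZ : Z = ∑ j, Real.exp (-β * E j))
    (q : Fin d → ℝ) (hq : ∀ i, q i = Real.exp (-β * E i) / Z)
    (p p' : Fin d → ℝ) (hp : IsProbVec p) (hp' : IsProbVec p')
    (hppos : ∀ i, 0 < p i) (hp'pos : ∀ i, 0 < p' i) :
    (∀ α : ℝ, renyiD α p' q ≤ renyiD α p q) ↔
      (∀ ε : ℝ, 0 < ε →
        ∃ (m : ℕ) (r s : Fin m → ℝ),
          IsProbVec r ∧ IsProbVec s ∧ (∀ j, 0 < s j) ∧
          ∃ Λ : Matrix (Fin d × Fin m) (Fin d × Fin m) ℝ,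
            ColStochastic Λ ∧
            Λ.mulVec (tensorVec q s) = tensorVec q s ∧
            ∃ p'' : Fin d → ℝ, IsProbVec p'' ∧ traceDist p'' p' ≤ ε ∧
              Λ.mulVec (tensorVec p r) = tensorVec p'' r) := by
  obtain rfl : q = fun i => Real.exp (-β * E i) / ∑ j, Real.exp (-β * E j) := hZ ▸ funext hq
  have hq_pos : ∀ i, 0 < Real.exp (-β * E i) / ∑ j, Real.exp (-β * E j) := fun i =>
    div_pos (Real.exp_pos _) (Finset.sum_pos (fun _ _ => Real.exp_pos _) ⟨i, Finset.mem_univ i⟩)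
  have := nonempty_of_sum_eq_one hp.2
  exact secondLaws_blockDiagonal_general (isProbVec_div_sum fun _ => Real.exp_pos _) hp hp' hq_pos
    hppos hp'pos
end

section
/- Fix β > 0, energies E ∈ ℝ^d, Gibbs weights g_i = e^{-βE_i}, Z = ∑_i g_i, and q = g/Z. Let p, p' ∈ ℝ^d be probability vectors such that p thermo-majorizes p', i.e. ∑_i max(p_i − t g_i, 0) ≥ ∑_i max(p'_i − t g_i, 0) for all t ≥ 0. Then the nonequilibrium free energy F(p) = ∑_i p_i E_i − β^{-1} H(p) satisfies F(p) ≥ F(p'), where H(p) = −∑_i p_i ln p_i is the Shannon entropy (with 0·ln 0 = 0). -/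
open scoped BigOperators Topology
open Filter

/-!
For `0 ≤ x ≤ M`, Taylor expansion around `M` with integral remainder reads
`x log x = x log M + x - M + ∫ t in 0..M, (t - x)⁺ / t`; the integrand is bounded by `1`, so the
formula survives at `x = 0`. Hence, up to an affine function, `x log x` is a mixture of the hinges
`(t - x)⁺ = (x - t)⁺ + t - x` with nonnegative weights. Thermo-majorization compares the
Gibbs-weighted sums of `(x - t)⁺` at `x = p i / g i`, and the affine terms have equal sums for `p`
and `p'`. So integrating over `t` compares the relative entropies `∑ p log (p / g)`, and these are
`β * F(p)`.
-/

section Hinge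

variable {x M : ℝ}

lemma intervalIntegrable_max_sub_div (hx : 0 ≤ x) (hM : 0 ≤ M) :
    IntervalIntegrable (fun t => max (t - x) 0 / t) MeasureTheory.volume 0 M := by
  refine (intervalIntegrable_const (c := (1 : ℝ))).mono_fun'
    (by fun_prop : Measurable fun t : ℝ => max (t - x) 0 / t).aestronglyMeasurable ?_
  filter_upwards [MeasureTheory.ae_restrict_mem measurableSet_uIoc] with t ht
  rw [Set.uIoc_of_le hM] at ht
  rw [Real.norm_of_nonneg (div_nonneg (le_max_right _ _) ht.1.le), div_le_one ht.1]
  exact max_le (sub_le_self t hx) ht.1.le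

lemma integral_one_sub_mul_inv (hx : 0 ≤ x) (hxM : x ≤ M) :
    ∫ t in x..M, (1 - x * t⁻¹) = x * Real.log x - x * Real.log M - x + M := by
  rcases hx.eq_or_lt with rfl | hx_pos
  · simp
  · have hM_pos : 0 < M := hx_pos.trans_le hxM
    have h_inv : IntervalIntegrable (fun t : ℝ => t⁻¹) MeasureTheory.volume x M :=
      intervalIntegrable_inv_iff.2 (.inr (Set.notMem_uIcc_of_lt hx_pos hM_pos))
    rw [intervalIntegral.integral_sub intervalIntegrable_const (h_inv.const_mul x),
      intervalIntegral.integral_const, intervalIntegral.integral_const_mul,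
      integral_inv_of_pos hx_pos hM_pos, Real.log_div hM_pos.ne' hx_pos.ne', smul_eq_mul]
    ring

lemma integral_max_sub_div (hx : 0 ≤ x) (hxM : x ≤ M) :
    ∫ t in 0..M, max (t - x) 0 / t = x * Real.log x - x * Real.log M - x + M := by
  have h_int := intervalIntegrable_max_sub_div hx (hx.trans hxM)
  have hx_mem : x ∈ Set.uIcc 0 M := Set.mem_uIcc_of_le hx hxM
  have h_below : ∫ t in 0..x, max (t - x) 0 / t = 0 := by
    refine (intervalIntegral.integral_congr_Ioo_of_le (g := fun _ => 0) hx fun t ht => ?_).trans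
      intervalIntegral.integral_zero
    simp only [max_eq_right (sub_nonpos.2 ht.2.le), zero_div]
  have h_above : ∫ t in x..M, max (t - x) 0 / t = ∫ t in x..M, (1 - x * t⁻¹) := by
    refine intervalIntegral.integral_congr_Ioo_of_le hxM fun t ht => ?_
    have ht_ne : t ≠ 0 := (hx.trans_lt ht.1).ne'
    simp only [max_eq_left (sub_nonneg.2 ht.1.le), sub_div, div_self ht_ne, div_eq_mul_inv x]
  rw [← intervalIntegral.integral_add_adjacent_intervals
      (h_int.mono_set (Set.uIcc_subset_uIcc_left hx_mem))
      (h_int.mono_set (Set.uIcc_subset_uIcc_right hx_mem)),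
    h_below, h_above, zero_add, integral_one_sub_mul_inv hx hxM]

end Hinge

section WeightedSums

variable {ι : Type*} [Fintype ι]

lemma sum_mul_max_sub_comm (g x : ι → ℝ) (t : ℝ) :
    ∑ i, g i * max (t - x i) 0
      = ∑ i, g i * max (x i - t) 0 + (∑ i, g i) * t - ∑ i, g i * x i := by
  rw [Finset.sum_mul, ← Finset.sum_add_distrib, ← Finset.sum_sub_distrib]
  refine Finset.sum_congr rfl fun i _ => ?_
  have hswap : max (t - x i) 0 = max (x i - t) 0 + t - x i := by
    rw [← max_add_add_right, sub_add_cancel, zero_add, max_comm, ← max_sub_sub_right, sub_self]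
  rw [hswap]
  ring

lemma intervalIntegrable_sum_mul_max_sub_div (g : ι → ℝ) {x : ι → ℝ} {M : ℝ}
    (hx : ∀ i, 0 ≤ x i) (hM : 0 ≤ M) :
    IntervalIntegrable (fun t => ∑ i, g i * (max (t - x i) 0 / t)) MeasureTheory.volume 0 M := by
  simpa only [Finset.sum_fn] using IntervalIntegrable.sum Finset.univ
    fun i _ => (intervalIntegrable_max_sub_div (hx i) hM).const_mul (g i)

lemma integral_sum_mul_max_sub_div (g : ι → ℝ) {x : ι → ℝ} {M : ℝ}
    (hx : ∀ i, 0 ≤ x i) (hM : 0 ≤ M) (hxM : ∀ i, x i ≤ M) :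
    ∫ t in 0..M, ∑ i, g i * (max (t - x i) 0 / t)
      = ∑ i, g i * (x i * Real.log (x i)) - (∑ i, g i * x i) * (Real.log M + 1)
        + (∑ i, g i) * M := by
  rw [intervalIntegral.integral_finsetSum fun i _ =>
      (intervalIntegrable_max_sub_div (hx i) hM).const_mul (g i),
    Finset.sum_mul, Finset.sum_mul, ← Finset.sum_sub_distrib, ← Finset.sum_add_distrib]
  refine Finset.sum_congr rfl fun i _ => ?_
  rw [intervalIntegral.integral_const_mul, integral_max_sub_div (hx i) (hxM i)]
  ring

theorem sum_mul_mul_log_le_of_sum_mul_max_sub_le {g x x' : ι → ℝ}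
    (hx : ∀ i, 0 ≤ x i) (hx' : ∀ i, 0 ≤ x' i) (hsum : ∑ i, g i * x' i = ∑ i, g i * x i)
    (hmax : ∀ t, 0 < t → ∑ i, g i * max (x' i - t) 0 ≤ ∑ i, g i * max (x i - t) 0) :
    ∑ i, g i * (x' i * Real.log (x' i)) ≤ ∑ i, g i * (x i * Real.log (x i)) := by
  obtain ⟨M, hM, hxM, hxM'⟩ : ∃ M, 0 ≤ M ∧ (∀ i, x i ≤ M) ∧ ∀ i, x' i ≤ M := by
    obtain ⟨B, hB⟩ := Finite.exists_le x
    obtain ⟨B', hB'⟩ := Finite.exists_le x'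
    exact ⟨max 0 (max B B'), le_max_left _ _, fun i => by simp [hB i], fun i => by simp [hB' i]⟩
  have h_integral : ∫ t in 0..M, ∑ i, g i * (max (t - x' i) 0 / t)
      ≤ ∫ t in 0..M, ∑ i, g i * (max (t - x i) 0 / t) := by
    refine intervalIntegral.integral_mono_on_of_le_Ioo hM
      (intervalIntegrable_sum_mul_max_sub_div g hx' hM)
      (intervalIntegrable_sum_mul_max_sub_div g hx hM) fun t ht => ?_
    simp only [← mul_div_assoc, ← Finset.sum_div]
    refine div_le_div_of_nonneg_right ?_ ht.1.le
    rw [sum_mul_max_sub_comm, sum_mul_max_sub_comm, hsum]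
    exact sub_le_sub_right (add_le_add_left (hmax t ht.1) _) _
  rw [integral_sum_mul_max_sub_div g hx' hM hxM', integral_sum_mul_max_sub_div g hx hM hxM,
    hsum] at h_integral
  linarith

end WeightedSums

section ThermoMajorization

variable {ι : Type*} [Fintype ι]

/-- Thermo-majorization of `p'` by `p` with respect to the Gibbs weights `g`, expressed through
hinge sums rather than thermo-majorization curves. -/
def ThermoMajorizes (g p p' : ι → ℝ) : Prop :=
  ∀ t : ℝ, 0 ≤ t → ∑ i, max (p' i - t * g i) 0 ≤ ∑ i, max (p i - t * g i) 0

/-- The nonequilibrium free energy `F(p) = ∑ p_i E_i - β⁻¹ H(p)`, with the Shannon entropy `H`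
written out; the convention `0 · ln 0 = 0` is built into `Real.log`. -/
noncomputable def freeEnergy (β : ℝ) (E p : ι → ℝ) : ℝ :=
  ∑ i, p i * E i - β⁻¹ * (-∑ i, p i * Real.log (p i))

theorem sum_mul_log_div_le_of_thermoMajorizes {g p p' : ι → ℝ} (hg : ∀ i, 0 < g i)
    (hp : ∀ i, 0 ≤ p i) (hp' : ∀ i, 0 ≤ p' i) (hsum : ∑ i, p' i = ∑ i, p i)
    (hTM : ThermoMajorizes g p p') :
    ∑ i, p' i * Real.log (p' i / g i) ≤ ∑ i, p i * Real.log (p i / g i) := by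
  have hmul (r : ι → ℝ) (i : ι) : g i * (r i / g i) = r i := mul_div_cancel₀ _ (hg i).ne'
  have hmax (r : ι → ℝ) (t : ℝ) (i : ι) :
      g i * max (r i / g i - t) 0 = max (r i - t * g i) 0 := by
    rw [mul_max_of_nonneg _ _ (hg i).le, mul_sub, hmul, mul_zero, mul_comm t]
  have h := sum_mul_mul_log_le_of_sum_mul_max_sub_le (g := g)
    (x := fun i => p i / g i) (x' := fun i => p' i / g i)
    (fun i => div_nonneg (hp i) (hg i).le) (fun i => div_nonneg (hp' i) (hg i).le)
    (by simpa only [hmul] using hsum) (fun t ht => by simpa only [hmax] using hTM t ht.le)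
  simpa only [← mul_assoc, hmul] using h

lemma sum_mul_log_div_exp_eq_mul_freeEnergy {β : ℝ} (hβ : β ≠ 0) (E p : ι → ℝ) :
    ∑ i, p i * Real.log (p i / Real.exp (-β * E i)) = β * freeEnergy β E p := by
  have hterm (i : ι) : p i * Real.log (p i / Real.exp (-β * E i))
      = β * (p i * E i) + p i * Real.log (p i) := by
    rcases eq_or_ne (p i) 0 with hpi | hpi
    · simp [hpi]
    · rw [Real.log_div hpi (Real.exp_ne_zero _), Real.log_exp]
      ring
  simp only [hterm, Finset.sum_add_distrib, ← Finset.mul_sum, freeEnergy]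
  field_simp
  ring

theorem freeEnergy_le_of_thermoMajorizes_general {β : ℝ} (hβ : 0 < β)
    {E g p p' : ι → ℝ} (hg : ∀ i, g i = Real.exp (-β * E i))
    (hp : ∀ i, 0 ≤ p i) (hp' : ∀ i, 0 ≤ p' i) (hsum : ∑ i, p' i = ∑ i, p i)
    (hTM : ThermoMajorizes g p p') :
    freeEnergy β E p' ≤ freeEnergy β E p := by
  have hg_pos (i : ι) : 0 < g i := hg i ▸ Real.exp_pos _
  have h := sum_mul_log_div_le_of_thermoMajorizes hg_pos hp hp' hsum hTM
  simp only [hg, sum_mul_log_div_exp_eq_mul_freeEnergy hβ.ne'] at h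
  exact le_of_mul_le_mul_left h hβ

end ThermoMajorization

/-- **Thermo-majorization implies the standard second law.** If `p` thermo-majorizes `p'`
(w.r.t. Gibbs weights `g_i = e^{-βE_i}`), then the nonequilibrium free energy
`F(p) = ∑ p_i E_i − β⁻¹ H(p)` does not increase: `F(p') ≤ F(p)`. -/
theorem freeEnergy_le_of_thermoMajorizes {d : ℕ} (β : ℝ) (hβ : 0 < β)
    (E g : Fin d → ℝ) (hg : ∀ i, g i = Real.exp (-β * E i))
    (p p' : Fin d → ℝ) (hp : IsProbVec p) (hp' : IsProbVec p')
    (hTM : ∀ t : ℝ, 0 ≤ t →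
      ∑ i, max (p' i - t * g i) 0 ≤ ∑ i, max (p i - t * g i) 0) :
    ∑ i, p' i * E i - β⁻¹ * (-∑ i, p' i * Real.log (p' i))
      ≤ ∑ i, p i * E i - β⁻¹ * (-∑ i, p i * Real.log (p i)) :=
  freeEnergy_le_of_thermoMajorizes_general hβ hg hp.1 hp'.1 (hp'.2.trans hp.2.symm) hTM
end
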